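/- Let d ≥ 2, ℓ ≥ 0 and p ≥ 1 be integers. Then there is no r > 0 with (Ξ_ℓ^{(d)})'(r) = 0 and (Ξ_{ℓ+p}^{(d)})'(r) = 0, i.e. the functions r ↦ (Ξ_ℓ^{(d)})'(r) and r ↦ (Ξ_{ℓ+p}^{(d)})'(r) have no common positive zeros. -/

import Mathlib

/-- The Bessel function of the first kind `J_ν`, defined for real order `ν`
by its power series (interpreted with real powers `(x/2)^(2k+ν)`). -/
noncomputable def besselJ (ν x : ℝ) : ℝ :=
  ∑' k : ℕ, (-1 : ℝ) ^ k / (k.factorial * Real.Gamma ((k : ℝ) + ν + 1)) *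
    (x / 2) ^ (2 * (k : ℝ) + ν)

/-- `Ξ_ℓ^{(d)}(r) = r^{(2-d)/2} J_{ℓ + d/2 - 1}(r)`. -/
noncomputable def Xi (d ℓ : ℕ) (r : ℝ) : ℝ :=
  r ^ (((2 : ℝ) - d) / 2) * besselJ ((ℓ : ℝ) + (d : ℝ) / 2 - 1) r

section Arithmetic

open Polynomial Finset

section Connection

variable {R : Type*} [CommRing R] {M : ℕ}

/-- The connection `P ↦ θ P + P A` on row vectors over a ring `R` with a derivation `θ`. -/
def conn (θ : R →+ R) (A : Matrix (Fin M) (Fin M) R) (P : Fin M → R) : Fin M → R :=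
  fun i => θ (P i) + ∑ j, P j * A j i

/-- The connection dual to `conn`. -/
def dualConn (θ : R →+ R) (A : Matrix (Fin M) (Fin M) R) (u : Fin M → R) : Fin M → R :=
  fun j => θ (u j) - ∑ i, A j i * u i

/-- The matrix whose rows are the first `M` iterates of `conn` applied to `P`. -/
def connMatrix (θ : R →+ R) (A : Matrix (Fin M) (Fin M) R) (P : Fin M → R) :
    Matrix (Fin M) (Fin M) R :=
  Matrix.of fun k => (conn θ A)^[k] P

variable {θ : R →+ R} (hθ : ∀ a b, θ (a * b) = a * θ b + b * θ a) (A : Matrix (Fin M) (Fin M) R)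

lemma conn_zero : conn θ A 0 = 0 := by
  ext i; simp [conn]

lemma conn_add (P Q : Fin M → R) : conn θ A (P + Q) = conn θ A P + conn θ A Q := by
  ext i
  simp only [conn, Pi.add_apply, map_add, add_mul, sum_add_distrib]
  ring

include hθ in
lemma conn_smul (a : R) (P : Fin M → R) :
    conn θ A (a • P) = θ a • P + a • conn θ A P := by
  ext i
  simp only [conn, Pi.smul_apply, Pi.add_apply, smul_eq_mul, hθ, mul_add, mul_sum,
    mul_assoc]
  ring

lemma conn_map {S : Type*} [CommRing S] (θ' : S →+ S) (φ : R →+* S)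
    (h : ∀ a, θ' (φ a) = φ (θ a)) (P : Fin M → R) :
    conn θ' (A.map φ) (φ ∘ P) = φ ∘ conn θ A P := by
  ext i
  simp [conn, h]

lemma conn_iterate_map {S : Type*} [CommRing S] (θ' : S →+ S) (φ : R →+* S)
    (h : ∀ a, θ' (φ a) = φ (θ a)) (P : Fin M → R) (k : ℕ) :
    (conn θ' (A.map φ))^[k] (φ ∘ P) = φ ∘ (conn θ A)^[k] P := by
  induction k with
  | zero => rfl
  | succ k ih => rw [Function.iterate_succ_apply', Function.iterate_succ_apply', ih,
      conn_map A θ' φ h]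

include hθ in
lemma derivation_dotProduct (u w : Fin M → R) :
    θ (u ⬝ᵥ w) = dualConn θ A u ⬝ᵥ w + u ⬝ᵥ conn θ A w := by
  simp only [dotProduct, map_sum, hθ, dualConn, conn, sub_mul, mul_add,
    sum_sub_distrib, sum_add_distrib, sum_mul, mul_sum]
  rw [sum_comm (f := fun i j => A i j * u j * w i),
    sum_congr rfl fun i _ => sum_congr rfl fun j _ => (show A j i * u i * w j = u i * (w j * A j i) by ring)]
  rw [sum_congr rfl fun i _ => mul_comm (w i) (θ (u i))]
  ring

include hθ in
lemma derivation_iterate_dotProduct {F : Fin M → R} (hF : ∀ j, θ (F j) = ∑ i, A j i * F i)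
    (P : Fin M → R) (k : ℕ) :
    θ^[k] (P ⬝ᵥ F) = (conn θ A)^[k] P ⬝ᵥ F := by
  induction k generalizing P with
  | zero => rfl
  | succ k ih =>
    have : dualConn θ A F = 0 := by ext j; simp [dualConn, hF]
    rw [Function.iterate_succ_apply, Function.iterate_succ_apply, ← ih, dotProduct_comm,
      derivation_dotProduct hθ A, this, zero_dotProduct, zero_add, dotProduct_comm]

include hθ in
/-- If the first `M` iterates of the connection are linearly dependent, then all iterates are
orthogonal to a common nonzero vector. -/
lemma exists_annihilator [IsDomain R] (P : Fin M → R) (hdet : (connMatrix θ A P).det = 0) :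
    ∃ u : Fin M → R, u ≠ 0 ∧ ∀ k, u ⬝ᵥ (conn θ A)^[k] P = 0 := by
  classical
  obtain ⟨u, hu, hker⟩ := Matrix.exists_mulVec_eq_zero_iff.mpr hdet
  obtain ⟨c, hc, hrel⟩ := Matrix.exists_vecMul_eq_zero_iff.mpr hdet
  refine ⟨u, hu, ?_⟩
  obtain ⟨r, hr, hmax⟩ : ∃ r : Fin M, c r ≠ 0 ∧ ∀ k, r < k → c k = 0 := by
    have hne : (univ.filter fun k => c k ≠ 0).Nonempty := by
      by_contra h
      refine hc (funext fun k => ?_)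
      by_contra hk
      exact h ⟨k, by simpa using hk⟩
    refine ⟨_, (mem_filter.mp (max'_mem _ hne)).2, fun k hk => ?_⟩
    by_contra h
    exact absurd (le_max' _ k (by simpa using h)) (not_le.mpr hk)
  let V : Submodule R (Fin M → R) := Submodule.span R ((fun k => (conn θ A)^[k] P) '' Set.Iio (r : ℕ))
  have hsat : ∀ w, ∀ e : R, e ≠ 0 → e • w ∈ V → u ⬝ᵥ w = 0 := by
    intro w e he hw
    have : ∀ w ∈ V, u ⬝ᵥ w = 0 := by
      intro w hw
      induction hw using Submodule.span_induction with
      | mem x hx =>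
        obtain ⟨k, hk, rfl⟩ := hx
        have := congrFun hker ⟨k, (Set.mem_Iio.mp hk).trans r.2⟩
        simpa [Matrix.mulVec, connMatrix, dotProduct_comm] using this
      | zero => simp
      | add x y _ _ hx hy => rw [dotProduct_add, hx, hy, add_zero]
      | smul a x _ hx => rw [dotProduct_smul, hx, smul_zero]
    have h := this _ hw
    rw [dotProduct_smul, smul_eq_mul] at h
    exact (mul_eq_zero.mp h).resolve_left he
  have hlow : ∀ k, k < (r : ℕ) → (conn θ A)^[k] P ∈ V := fun k hk =>
    Submodule.subset_span ⟨k, hk, rfl⟩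
  have hstep : ∀ k, k ≤ (r : ℕ) → c r • (conn θ A)^[k] P ∈ V := by
    intro k hk
    rcases hk.lt_or_eq with hk | rfl
    · exact V.smul_mem _ (hlow k hk)
    · have h0 : ∑ k, c k • (conn θ A)^[k] P = 0 := by
        rw [← hrel]; ext i; simp [Matrix.vecMul, dotProduct, connMatrix]
      rw [← add_sum_erase _ _ (mem_univ r)] at h0
      rw [eq_neg_of_add_eq_zero_left h0]
      refine V.neg_mem (V.sum_mem fun k hk => ?_)
      rcases lt_or_ge r k with h | h
      · rw [hmax k h, zero_smul]; exact V.zero_mem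
      · exact V.smul_mem _ (hlow k (lt_of_le_of_ne h fun e => (ne_of_mem_erase hk) (Fin.ext e)))
  have hconnV : ∀ w ∈ V, c r • conn θ A w ∈ V := by
    intro w hw
    induction hw using Submodule.span_induction with
    | mem x hx =>
      obtain ⟨k, hk, rfl⟩ := hx
      have := hstep (k + 1) hk
      rwa [Function.iterate_succ_apply'] at this
    | zero => rw [conn_zero, smul_zero]; exact V.zero_mem
    | add x y _ _ hx hy => rw [conn_add, smul_add]; exact V.add_mem hx hy
    | smul a x hx' hx =>
      rw [conn_smul hθ, smul_add, smul_comm (c r) a]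
      exact V.add_mem (V.smul_mem _ (V.smul_mem _ hx')) (V.smul_mem _ hx)
  have hall : ∀ k, ∃ e : R, e ≠ 0 ∧ e • (conn θ A)^[k] P ∈ V := by
    intro k
    induction k with
    | zero => exact ⟨c r, hr, hstep 0 (Nat.zero_le _)⟩
    | succ k ih =>
      obtain ⟨e, he, hk⟩ := ih
      refine ⟨c r * e * e, mul_ne_zero (mul_ne_zero hr he) he, ?_⟩
      have h1 := V.smul_mem e (hconnV _ hk)
      have h2 := V.smul_mem (c r * θ e) hk
      rw [Function.iterate_succ_apply']
      convert V.sub_mem h1 h2 using 1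
      rw [conn_smul hθ]
      ext i
      simp only [Pi.smul_apply, Pi.add_apply, Pi.sub_apply, smul_eq_mul]
      ring
  intro k
  obtain ⟨e, he, hk⟩ := hall k
  exact hsat _ e he hk

lemma det_smul_single_eq_sum (P : Fin M → R) (i : Fin M) :
    (connMatrix θ A P).det • Pi.single i (1 : R) =
      ∑ k : Fin M, (connMatrix θ A P).adjugate i k • (conn θ A)^[k] P := by
  ext l
  have := congrFun (congrFun (connMatrix θ A P).adjugate_mul i) l
  rw [Matrix.mul_apply] at this
  simp only [Pi.smul_apply, smul_eq_mul]
  rw [Finset.sum_apply]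
  refine Eq.trans ?_ this.symm
  simp [Matrix.one_apply, Pi.single_apply, eq_comm]

end Connection

/-- The Euler derivation `X d/dX` on polynomials. -/
noncomputable def polyEuler (R : Type*) [CommRing R] : R[X] →+ R[X] where
  toFun p := X * derivative p
  map_zero' := by simp
  map_add' p q := by simp [mul_add]

lemma polyEuler_apply {R : Type*} [CommRing R] (p : R[X]) : polyEuler R p = X * derivative p := rfl

lemma polyEuler_coeff {R : Type*} [CommRing R] (p : R[X]) (n : ℕ) :
    (polyEuler R p).coeff n = n * p.coeff n := by
  rw [polyEuler_apply]
  cases n with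
  | zero => simp
  | succ n => rw [coeff_X_mul, coeff_derivative]; push_cast; ring

lemma polyEuler_mul {R : Type*} [CommRing R] (p q : R[X]) :
    polyEuler R (p * q) = p * polyEuler R q + q * polyEuler R p := by
  simp only [polyEuler_apply, derivative_mul]
  ring

section Vanishing

variable {M : ℕ} (A : Matrix (Fin M) (Fin M) ℂ[X]) (z : ℂ) (v : Fin M → ℂ)

/-- `P` vanishes to order `j` at `z` along the horizontal direction `v`. -/
def VanishesTo (j : ℕ) (P : Fin M → ℂ[X]) : Prop :=
  ∀ k < j, ∑ i, ((conn (polyEuler ℂ) A)^[k] P i).eval z * v i = 0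

variable {A z v}

lemma VanishesTo.mono {j l : ℕ} {P : Fin M → ℂ[X]} (h : VanishesTo A z v j P) (hl : l ≤ j) :
    VanishesTo A z v l P := fun k hk => h k (hk.trans_le hl)

lemma vanishesTo_succ {j : ℕ} {P : Fin M → ℂ[X]} :
    VanishesTo A z v (j + 1) P ↔
      ∑ i, (P i).eval z * v i = 0 ∧ VanishesTo A z v j (conn (polyEuler ℂ) A P) := by
  constructor
  · intro h
    exact ⟨h 0 (Nat.succ_pos j), fun k hk => h (k + 1) (Nat.succ_lt_succ hk)⟩
  · rintro ⟨h0, h⟩ k hk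
    cases k with
    | zero => exact h0
    | succ k => exact h k (Nat.lt_of_succ_lt_succ hk)

lemma VanishesTo.add {j : ℕ} {P Q : Fin M → ℂ[X]} (hP : VanishesTo A z v j P)
    (hQ : VanishesTo A z v j Q) : VanishesTo A z v j (P + Q) := by
  induction j generalizing P Q with
  | zero => intro k hk; omega
  | succ j ih =>
    rw [vanishesTo_succ] at *
    refine ⟨?_, ?_⟩
    · simp only [Pi.add_apply, eval_add, add_mul, sum_add_distrib, hP.1, hQ.1, add_zero]
    · rw [conn_add]; exact ih hP.2 hQ.2

lemma VanishesTo.smul {j : ℕ} {P : Fin M → ℂ[X]} (a : ℂ[X]) (hP : VanishesTo A z v j P) :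
    VanishesTo A z v j (a • P) := by
  induction j generalizing a P with
  | zero => intro k hk; omega
  | succ j ih =>
    have hP' := hP.mono j.le_succ
    rw [vanishesTo_succ] at *
    refine ⟨?_, ?_⟩
    · simp only [Pi.smul_apply, smul_eq_mul, eval_mul, mul_assoc, ← mul_sum, hP.1, mul_zero]
    · rw [conn_smul polyEuler_mul]; exact (ih _ hP').add (ih _ hP.2)

lemma vanishesTo_zero (j : ℕ) : VanishesTo A z v j 0 := by
  induction j with
  | zero => intro k hk; omega
  | succ j ih => rw [vanishesTo_succ, conn_zero]; exact ⟨by simp, ih⟩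

lemma VanishesTo.sum {j : ℕ} {κ : Type*} (s : Finset κ) {P : κ → Fin M → ℂ[X]}
    (hP : ∀ k ∈ s, VanishesTo A z v j (P k)) : VanishesTo A z v j (∑ k ∈ s, P k) :=
  Finset.sum_induction _ _ (fun _ _ => VanishesTo.add) (vanishesTo_zero j) hP

lemma VanishesTo.iterate {j k : ℕ} {P : Fin M → ℂ[X]} (hP : VanishesTo A z v (j + k) P) :
    VanishesTo A z v j ((conn (polyEuler ℂ) A)^[k] P) := by
  intro l hl
  rw [← Function.iterate_add_apply]
  exact hP _ (by omega)

lemma pow_dvd_of_vanishesTo_smul_single (hz : z ≠ 0) (hv : v ≠ 0) (j : ℕ) {a : ℂ[X]}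
    (h : ∀ i, VanishesTo A z v j (a • Pi.single i 1)) : (X - C z) ^ j ∣ a := by
  induction j generalizing a with
  | zero => simp
  | succ j ih =>
    obtain ⟨i, hi⟩ := Function.ne_iff.mp hv
    have hroot : a.eval z = 0 := by
      have := (vanishesTo_succ.mp (h i)).1
      simp only [Pi.smul_apply, smul_eq_mul, Pi.single_apply, mul_ite, mul_one, mul_zero] at this
      rw [sum_eq_single i (by intro b _ hb; simp [hb]) (by simp)] at this
      simpa using (mul_eq_zero.mp (by simpa using this)).resolve_right hi
    have hder : ∀ i, VanishesTo A z v j (polyEuler ℂ a • Pi.single i 1) := by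
      intro i
      have h1 := (vanishesTo_succ.mp (h i)).2
      rw [conn_smul polyEuler_mul] at h1
      have h2 : VanishesTo A z v j (a • conn (polyEuler ℂ) A (Pi.single i 1)) := by
        have : a • conn (polyEuler ℂ) A (Pi.single i 1) =
            ∑ l, A i l • (a • Pi.single l (1 : ℂ[X])) := by
          ext1 l
          simp [conn, Pi.single_apply, Finset.sum_apply, apply_ite (polyEuler ℂ), polyEuler_apply, mul_comm]
        rw [this]
        exact VanishesTo.sum _ fun l _ => ((h l).mono j.le_succ).smul _
      have := h1.add (h2.smul (-1))
      simpa using this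
    have hdvd := ih hder
    rw [polyEuler_apply] at hdvd
    have hcop : IsCoprime ((X - C z) ^ j) (X : ℂ[X]) := by
      refine IsCoprime.pow_left ?_
      have := isCoprime_X_sub_C_of_isUnit_sub (R := ℂ) (a := z) (b := 0) (by simpa using hz)
      simpa using this
    have hd := hcop.dvd_of_dvd_mul_left hdvd
    by_cases ha : a = 0
    · simp [ha]
    have hd0 : derivative a ≠ 0 := by
      intro h0
      have := derivative_eq_zero.mp h0
      rw [eq_C_of_natDegree_eq_zero this] at hroot ha
      simp at hroot
      simp [hroot] at ha
    rw [← le_rootMultiplicity_iff hd0, derivative_rootMultiplicity_of_root hroot] at hd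
    rw [← le_rootMultiplicity_iff ha]
    have := (rootMultiplicity_pos ha).mpr hroot
    omega

lemma pow_dvd_det_of_vanishesTo (hz : z ≠ 0) (hv : v ≠ 0) {K : ℕ} {P : Fin M → ℂ[X]}
    (h : VanishesTo A z v (K + M) P) :
    (X - C z) ^ K ∣ (connMatrix (polyEuler ℂ) A P).det := by
  refine pow_dvd_of_vanishesTo_smul_single (A := A) (v := v) hz hv K fun i => ?_
  rw [det_smul_single_eq_sum]
  refine VanishesTo.sum _ fun k _ => VanishesTo.smul _ ?_
  exact (h.mono (by omega : K + (k : ℕ) ≤ K + M)).iterate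

end Vanishing

/-- The Euler derivation `X d/dX` on formal power series. -/
noncomputable def psEuler : PowerSeries ℚ →+ PowerSeries ℚ where
  toFun F := PowerSeries.X * PowerSeries.derivative ℚ F
  map_zero' := by simp
  map_add' F G := by simp [mul_add]

lemma psEuler_mul (F G : PowerSeries ℚ) : psEuler (F * G) = F * psEuler G + G * psEuler F := by
  simp only [psEuler, AddMonoidHom.coe_mk, ZeroHom.coe_mk, Derivation.leibniz, smul_eq_mul]
  ring

lemma psEuler_coeff (F : PowerSeries ℚ) (n : ℕ) :
    PowerSeries.coeff n (psEuler F) = n * PowerSeries.coeff n F := by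
  simp only [psEuler, AddMonoidHom.coe_mk, ZeroHom.coe_mk]
  cases n with
  | zero => simp
  | succ n =>
    rw [PowerSeries.coeff_succ_X_mul, PowerSeries.coeff_derivative]
    push_cast; ring

lemma psEuler_iterate_coeff (F : PowerSeries ℚ) (n k : ℕ) :
    PowerSeries.coeff n (psEuler^[k] F) = n ^ k * PowerSeries.coeff n F := by
  induction k with
  | zero => simp
  | succ k ih => rw [Function.iterate_succ_apply', psEuler_coeff, ih]; ring

/-- Integer polynomials as formal power series over `ℚ`. -/
noncomputable def intPolyToPS : ℤ[X] →+* PowerSeries ℚ :=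
  (Polynomial.coeToPowerSeries.ringHom).comp (mapRingHom (Int.castRingHom ℚ))

lemma intPolyToPS_coeff (p : ℤ[X]) (n : ℕ) :
    PowerSeries.coeff n (intPolyToPS p) = (p.coeff n : ℚ) := by
  simp [intPolyToPS]

lemma intPolyToPS_injective : Function.Injective intPolyToPS := by
  intro p q h
  ext n
  have := congrArg (PowerSeries.coeff n) h
  simpa [intPolyToPS_coeff] using this

lemma psEuler_intPolyToPS (p : ℤ[X]) : psEuler (intPolyToPS p) = intPolyToPS (polyEuler ℤ p) := by
  ext n
  rw [psEuler_coeff, intPolyToPS_coeff, intPolyToPS_coeff, polyEuler_coeff]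
  push_cast; ring

lemma polyEuler_map {R S : Type*} [CommRing R] [CommRing S] (f : R →+* S) (p : R[X]) :
    polyEuler S (mapRingHom f p) = mapRingHom f (polyEuler R p) := by
  simp [polyEuler_apply, derivative_map]

/-- The linear form with polynomial coefficients `P` in the power series `F`. -/
noncomputable def linForm {M : ℕ} (F : Fin M → PowerSeries ℚ) (P : Fin M → ℤ[X]) : PowerSeries ℚ :=
  (intPolyToPS ∘ P) ⬝ᵥ F

section Iterates

variable {M : ℕ} (A : Matrix (Fin M) (Fin M) ℤ[X])

lemma psEuler_iterate_linForm {F : Fin M → PowerSeries ℚ}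
    (hF : ∀ j, psEuler (F j) = ∑ i, intPolyToPS (A j i) * F i) (P : Fin M → ℤ[X]) (k : ℕ) :
    psEuler^[k] (linForm F P) = linForm F ((conn (polyEuler ℤ) A)^[k] P) := by
  rw [linForm, derivation_iterate_dotProduct psEuler_mul (A.map intPolyToPS) hF,
    conn_iterate_map A psEuler intPolyToPS psEuler_intPolyToPS]
  rfl

lemma natDegree_polyEuler_le (p : ℤ[X]) : (polyEuler ℤ p).natDegree ≤ p.natDegree := by
  rw [natDegree_le_iff_coeff_eq_zero]
  intro n hn
  rw [polyEuler_coeff, coeff_eq_zero_of_natDegree_lt hn, mul_zero]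

variable {A}

lemma natDegree_conn_le (hA : ∀ i j, (A i j).natDegree ≤ 1) {P : Fin M → ℤ[X]} {d : ℕ}
    (hP : ∀ i, (P i).natDegree ≤ d) (i : Fin M) :
    (conn (polyEuler ℤ) A P i).natDegree ≤ d + 1 := by
  refine natDegree_add_le_of_degree_le ((natDegree_polyEuler_le _).trans ((hP i).trans d.le_succ)) ?_
  exact natDegree_sum_le_of_forall_le _ _ fun j _ => natDegree_mul_le_of_le (hP j) (hA j i)

lemma natDegree_conn_iterate_le (hA : ∀ i j, (A i j).natDegree ≤ 1) {P : Fin M → ℤ[X]} {d : ℕ}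
    (hP : ∀ i, (P i).natDegree ≤ d) (k : ℕ) (i : Fin M) :
    ((conn (polyEuler ℤ) A)^[k] P i).natDegree ≤ d + k := by
  induction k generalizing i with
  | zero => exact hP i
  | succ k ih => rw [Function.iterate_succ_apply']; exact natDegree_conn_le hA ih i

lemma natDegree_det_connMatrix_le (hA : ∀ i j, (A i j).natDegree ≤ 1) {P : Fin M → ℤ[X]} {d : ℕ}
    (hP : ∀ i, (P i).natDegree ≤ d) :
    (connMatrix (polyEuler ℤ) A P).det.natDegree ≤ M * (d + M) := by
  rw [Matrix.det_apply]
  refine natDegree_sum_le_of_forall_le _ _ fun τ _ => ?_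
  refine (natDegree_smul_le _ _).trans ?_
  refine (natDegree_prod_le _ _).trans ?_
  refine (sum_le_card_nsmul _ _ (d + M) fun i _ => ?_).trans (by simp)
  exact (natDegree_conn_iterate_le hA hP _ _).trans (by have := (τ i).2; omega)

lemma abs_coeff_conn_le {a : ℕ} (hA : ∀ i j, (A i j).natDegree ≤ 1)
    (ha : ∀ i j n, |(A i j).coeff n| ≤ a) {P : Fin M → ℤ[X]} {d : ℕ} {B : ℤ}
    (hd : ∀ i, (P i).natDegree ≤ d) (hP : ∀ i n, |(P i).coeff n| ≤ B) (i : Fin M) (n : ℕ) :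
    |(conn (polyEuler ℤ) A P i).coeff n| ≤ (d + 2 * M * a) * B := by
  have hB : 0 ≤ B := (abs_nonneg _).trans (hP i 0)
  rw [conn, coeff_add, finsetSum_coeff, polyEuler_coeff, add_mul]
  refine (abs_add_le _ _).trans (add_le_add ?_ ?_)
  · rw [abs_mul, Nat.abs_cast]
    rcases le_or_gt n d with h | h
    · have : (n : ℤ) ≤ d := by exact_mod_cast h
      exact mul_le_mul this (hP i n) (abs_nonneg _) (by positivity)
    · rw [coeff_eq_zero_of_natDegree_lt ((hd i).trans_lt h)]; simp; positivity
  · refine (abs_sum_le_sum_abs _ _).trans ?_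
    refine (sum_le_card_nsmul _ _ (2 * a * B) fun j _ => ?_).trans (by simp; nlinarith)
    have hAj : A j i = C ((A j i).coeff 1) * X + C ((A j i).coeff 0) :=
      eq_X_add_C_of_natDegree_le_one (hA j i)
    rw [hAj, mul_add, ← mul_assoc, coeff_add, coeff_mul_C]
    have h0 : |(P j).coeff n * (A j i).coeff 0| ≤ a * B := by
      rw [abs_mul, mul_comm]
      exact mul_le_mul (ha _ _ _) (hP _ _) (abs_nonneg _) (by positivity)
    have h1 : |(P j * C ((A j i).coeff 1) * X).coeff n| ≤ a * B := by
      cases n with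
      | zero => simp; positivity
      | succ n =>
        rw [coeff_mul_X, coeff_mul_C, abs_mul, mul_comm]
        exact mul_le_mul (ha _ _ _) (hP _ _) (abs_nonneg _) (by positivity)
    calc _ ≤ _ := abs_add_le _ _
      _ ≤ a * B + a * B := add_le_add h1 h0
      _ = _ := by ring

lemma abs_coeff_conn_iterate_le {a : ℕ} (hA : ∀ i j, (A i j).natDegree ≤ 1)
    (ha : ∀ i j n, |(A i j).coeff n| ≤ a) {P : Fin M → ℤ[X]} {d : ℕ} {B : ℤ}
    (hd : ∀ i, (P i).natDegree ≤ d) (hP : ∀ i n, |(P i).coeff n| ≤ B) (k : ℕ) {W : ℤ}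
    (hW : (d + k + 2 * M * a : ℤ) ≤ W) (i : Fin M) (n : ℕ) :
    |((conn (polyEuler ℤ) A)^[k] P i).coeff n| ≤ W ^ k * B := by
  induction k generalizing i n with
  | zero => simpa using hP i n
  | succ k ih =>
    have hB : 0 ≤ B := (abs_nonneg _).trans (hP i 0)
    have hW0 : 0 ≤ W := le_trans (by positivity) hW
    push_cast at hW
    rw [Function.iterate_succ_apply']
    have hWk : (↑(d + k) + 2 * M * a : ℤ) ≤ W := by push_cast; linarith
    refine (abs_coeff_conn_le hA ha (natDegree_conn_iterate_le hA hd k)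
      (ih (by linarith)) i n).trans ?_
    rw [pow_succ', mul_assoc W]
    exact mul_le_mul_of_nonneg_right hWk (mul_nonneg (pow_nonneg hW0 k) hB)

/-- Vanishing of the linear form `P` at the origin is inherited by the determinant. -/
lemma X_pow_dvd_det {F : Fin M → PowerSeries ℚ}
    (hF : ∀ j, psEuler (F j) = ∑ i, intPolyToPS (A j i) * F i) (hunit : ∃ i, IsUnit (F i))
    {P : Fin M → ℤ[X]} {T : ℕ} (hT : PowerSeries.X ^ T ∣ linForm F P) :
    X ^ T ∣ (connMatrix (polyEuler ℤ) A P).det := by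
  obtain ⟨i₀, hu⟩ := hunit
  set Δ := (connMatrix (polyEuler ℤ) A P).det with hΔ
  have hd : PowerSeries.X ^ T ∣ intPolyToPS Δ * F i₀ := by
    have h := congrArg (linForm F) (det_smul_single_eq_sum (θ := polyEuler ℤ) A P i₀)
    have hl : linForm F ((connMatrix (polyEuler ℤ) A P).det • Pi.single i₀ 1) =
        intPolyToPS Δ * F i₀ := by
      simp [linForm, dotProduct, Pi.single_apply, hΔ, apply_ite intPolyToPS]
    have hr : linForm F (∑ k : Fin M, (connMatrix (polyEuler ℤ) A P).adjugate i₀ k •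
        (conn (polyEuler ℤ) A)^[k] P) = ∑ k : Fin M,
          intPolyToPS ((connMatrix (polyEuler ℤ) A P).adjugate i₀ k) *
            linForm F ((conn (polyEuler ℤ) A)^[k] P) := by
      simp only [linForm, dotProduct, Function.comp_apply, Finset.sum_apply, Pi.smul_apply,
        smul_eq_mul, map_sum, map_mul, sum_mul, mul_sum, mul_assoc]
      exact sum_comm
    rw [← hl, h, hr]
    refine dvd_sum fun k _ => Dvd.dvd.mul_left ?_ _
    rw [← psEuler_iterate_linForm A hF, PowerSeries.X_pow_dvd_iff]
    intro m hm
    rw [psEuler_iterate_coeff, PowerSeries.X_pow_dvd_iff.mp hT m hm, mul_zero]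
  rw [hu.dvd_mul_right, PowerSeries.X_pow_dvd_iff] at hd
  rw [X_pow_dvd_iff]
  intro m hm
  have := hd m hm
  rw [intPolyToPS_coeff] at this
  exact_mod_cast this

/-- Nonvanishing of some derivative of the linear form `P` at the point `z`, within the range
allowed by the degree of the determinant. -/
lemma exists_conn_iterate_eval_ne_zero {F : Fin M → PowerSeries ℚ}
    (hF : ∀ j, psEuler (F j) = ∑ i, intPolyToPS (A j i) * F i)
    (hA : ∀ i j, (A i j).natDegree ≤ 1) (hunit : ∃ i, IsUnit (F i))
    {P : Fin M → ℤ[X]} {d T K : ℕ} (hP : ∀ i, (P i).natDegree ≤ d)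
    (hT : PowerSeries.X ^ T ∣ linForm F P)
    (hdet : (connMatrix (polyEuler ℤ) A P).det ≠ 0)
    {z : ℂ} (hz : z ≠ 0) {v : Fin M → ℂ} (hv : v ≠ 0) (hK : M * (d + M) < T + K) :
    ∃ k < K + M, ∑ i, aeval z ((conn (polyEuler ℤ) A)^[k] P i) * v i ≠ 0 := by
  by_contra! hcon
  set Δ := (connMatrix (polyEuler ℤ) A P).det with hΔ
  let φ := mapRingHom (Int.castRingHom ℂ)
  have hmap : ∀ k, (conn (polyEuler ℂ) (A.map φ))^[k] (φ ∘ P) =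
      φ ∘ (conn (polyEuler ℤ) A)^[k] P := fun k =>
    conn_iterate_map A _ φ (polyEuler_map _) P k
  have h1 : (X - C z) ^ K ∣ φ Δ := by
    have h : VanishesTo (A.map φ) z v (K + M) (φ ∘ P) := by
      intro k hk
      rw [hmap]
      have := hcon k hk
      simpa [φ, aeval_def, eval_map] using this
    have := pow_dvd_det_of_vanishesTo hz hv h
    rw [hΔ, RingHom.map_det]
    convert this using 2
    ext1 k i
    simp only [connMatrix, hmap, RingHom.mapMatrix_apply, Matrix.map_apply, Matrix.of_apply,
      Function.comp_apply]
  have h2 : X ^ T ∣ φ Δ := by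
    simpa [φ] using map_dvd φ (X_pow_dvd_det hF hunit hT)
  have hcop : IsCoprime ((X : ℂ[X]) ^ T) ((X - C z) ^ K) := by
    refine IsCoprime.pow ?_
    have := isCoprime_X_sub_C_of_isUnit_sub (R := ℂ) (a := 0) (b := z) (by simpa using hz)
    simpa using this
  have hdvd := hcop.mul_dvd h2 h1
  have hφ : φ Δ ≠ 0 := by
    intro h
    exact hdet (map_injective _ (RingHom.injective_int (Int.castRingHom ℂ)) (by simpa [φ] using h))
  have hdeg := natDegree_le_of_dvd hdvd hφ
  rw [natDegree_mul (pow_ne_zero _ X_ne_zero) (pow_ne_zero _ (X_sub_C_ne_zero z)), natDegree_pow,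
    natDegree_pow, natDegree_X, natDegree_X_sub_C] at hdeg
  have h3 : (φ Δ).natDegree ≤ Δ.natDegree := natDegree_map_le
  have h4 : Δ.natDegree ≤ _ := natDegree_det_connMatrix_le hA hP
  omega

end Iterates

section Siegel

attribute [local instance] Matrix.seminormedAddCommGroup

/-- Siegel's lemma with an integral exponent. -/
lemma exists_int_vec_abs_le {α β : Type*} [Fintype α] [Fintype β] (A : Matrix α β ℤ)
    {b e Q : ℕ} (hα : 0 < Fintype.card α) (hαβ : Fintype.card α < Fintype.card β) (hb : 1 ≤ b)
    (hA : ∀ i j, |A i j| ≤ b) (hQ : Fintype.card β * b ≤ Q)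
    (he : Fintype.card α ≤ e * (Fintype.card β - Fintype.card α)) :
    ∃ t : β → ℤ, t ≠ 0 ∧ A.mulVec t = 0 ∧ ∀ j, |t j| ≤ Q ^ e := by
  obtain ⟨t, ht, hAt, hn⟩ := Int.Matrix.exists_ne_zero_int_vec_norm_le A hαβ hα
  refine ⟨t, ht, hAt, fun j => ?_⟩
  have hAn : ‖A‖ ≤ b := (Matrix.norm_le_iff (by positivity)).mpr fun i j => by
    rw [Int.norm_eq_abs]; exact_mod_cast hA i j
  have hbase : (Fintype.card β * max 1 ‖A‖ : ℝ) ≤ Q := by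
    refine le_trans ?_ (by exact_mod_cast hQ : (Fintype.card β * b : ℝ) ≤ Q)
    gcongr
    exact max_le (by exact_mod_cast hb) hAn
  have hQ1 : (1 : ℝ) ≤ Q := by
    exact_mod_cast (Nat.mul_pos (by omega) (by omega) : 0 < Fintype.card β * b).trans_le hQ
  have hexp : (Fintype.card α : ℝ) / (Fintype.card β - Fintype.card α) ≤ (e : ℝ) := by
    have : (Fintype.card α : ℝ) < Fintype.card β := by exact_mod_cast hαβ
    rw [div_le_iff₀ (by linarith), ← Nat.cast_sub hαβ.le]
    exact_mod_cast he
  have h : ‖t‖ ≤ (Q : ℝ) ^ (e : ℝ) := by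
    refine hn.trans ((Real.rpow_le_rpow (by positivity) hbase ?_).trans
      (Real.rpow_le_rpow_of_exponent_le hQ1 hexp))
    have : (Fintype.card α : ℝ) < Fintype.card β := by exact_mod_cast hαβ
    exact div_nonneg (by positivity) (by linarith)
  rw [Real.rpow_natCast] at h
  have h2 := (norm_le_pi_norm t j).trans h
  rw [Int.norm_eq_abs] at h2
  exact_mod_cast h2

end Siegel

/-- The polynomials `∑ j < D, p i j * (D! / j!) ^ s * X ^ j`. -/
noncomputable def auxPoly {M : ℕ} (s D : ℕ) (p : Fin M → Fin D → ℤ) (i : Fin M) : ℤ[X] :=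
  ∑ j : Fin D, C (p i j * ((D.factorial / (j : ℕ).factorial : ℕ) : ℤ) ^ s) * X ^ (j : ℕ)

lemma auxPoly_coeff {M : ℕ} (s D : ℕ) (p : Fin M → Fin D → ℤ) (i : Fin M) (m : ℕ) :
    (auxPoly s D p i).coeff m = if h : m < D then
      p i ⟨m, h⟩ * ((D.factorial / m.factorial : ℕ) : ℤ) ^ s else 0 := by
  simp only [auxPoly, finsetSum_coeff, coeff_C_mul_X_pow]
  split_ifs with h
  · rw [sum_eq_single ⟨m, h⟩]
    · simp
    · intro j _ hj
      rw [if_neg]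
      rintro rfl
      exact hj rfl
    · simp
  · refine sum_eq_zero fun j _ => if_neg ?_
    have := j.2
    omega

lemma auxPoly_natDegree_le {M : ℕ} (s D : ℕ) (p : Fin M → Fin D → ℤ) (i : Fin M) :
    (auxPoly s D p i).natDegree ≤ D - 1 := by
  rw [natDegree_le_iff_coeff_eq_zero]
  intro m hm
  rw [auxPoly_coeff, dif_neg (by omega)]

lemma auxPoly_ne_zero {M : ℕ} (s D : ℕ) {p : Fin M → Fin D → ℤ} (hp : p ≠ 0) :
    auxPoly s D p ≠ 0 := by
  intro h
  refine hp (funext fun i => funext fun j => ?_)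
  have h1 := congrArg (fun q => coeff q (j : ℕ)) (congrFun h i)
  simp only [auxPoly_coeff, j.2, dif_pos, Pi.zero_apply, coeff_zero] at h1
  refine (mul_eq_zero.mp h1).resolve_right (pow_ne_zero _ ?_)
  have : 0 < D.factorial / (j : ℕ).factorial :=
    Nat.div_pos (Nat.factorial_le j.2.le) (Nat.factorial_pos _)
  exact_mod_cast this.ne'

lemma abs_auxPoly_coeff_le {M : ℕ} (s D : ℕ) {p : Fin M → Fin D → ℤ} {B : ℕ}
    (hp : ∀ i j, |p i j| ≤ B) (i : Fin M) (m : ℕ) :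
    |(auxPoly s D p i).coeff m| ≤ (B * D.factorial ^ s : ℕ) := by
  rw [auxPoly_coeff]
  split_ifs with h
  · rw [abs_mul, abs_pow, Nat.abs_cast]
    push_cast
    gcongr
    · exact hp _ _
    · exact_mod_cast Nat.div_le_self _ _
  · simp only [abs_zero]
    positivity

section SiegelForm

variable {M : ℕ} {s : ℕ} {F : Fin M → PowerSeries ℚ} {c : Fin M → ℕ → ℤ}

lemma linForm_auxPoly_coeff (hs : 1 ≤ s)
    (hc : ∀ i m, PowerSeries.coeff m (F i) = (c i m : ℚ) / (m.factorial : ℚ) ^ s)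
    (D : ℕ) (p : Fin M → Fin D → ℤ) (m : ℕ) :
    PowerSeries.coeff m (linForm F (auxPoly s D p)) =
      ((D.factorial : ℚ) / m.factorial) ^ s *
        ((∑ x : Fin M × Fin D, ((m.choose x.2 : ℕ) : ℤ) ^ s * c x.1 (m - x.2) * p x.1 x.2 : ℤ) : ℚ) := by
  rw [linForm, dotProduct, map_sum, Fintype.sum_prod_type, Int.cast_sum, mul_sum]
  refine sum_congr rfl fun i _ => ?_
  have hP : intPolyToPS (auxPoly s D p i) = ∑ j : Fin D,
      PowerSeries.C ((p i j * ((D.factorial / (j : ℕ).factorial : ℕ) : ℤ) ^ s : ℤ) : ℚ) *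
        PowerSeries.X ^ (j : ℕ) := by
    simp only [auxPoly, map_sum, map_mul, map_pow]
    refine sum_congr rfl fun j _ => ?_
    simp [intPolyToPS]
  rw [Function.comp_apply, hP, sum_mul, map_sum, Int.cast_sum, mul_sum]
  refine sum_congr rfl fun j _ => ?_
  rw [mul_assoc, PowerSeries.coeff_C_mul, PowerSeries.coeff_X_pow_mul']
  split_ifs with h
  · rw [hc]
    have h1 : ((D.factorial / (j : ℕ).factorial : ℕ) : ℚ) = D.factorial / (j : ℕ).factorial :=
      Nat.cast_div (Nat.factorial_dvd_factorial j.2.le) (by positivity)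
    have h2 : ((m.choose j : ℕ) : ℚ) = m.factorial / ((j : ℕ).factorial * (m - j).factorial) :=
      Nat.cast_choose ℚ h
    simp only [Int.cast_mul, Int.cast_pow, Int.cast_natCast]
    rw [h1, h2, div_pow, div_pow, div_pow, mul_pow]
    field_simp
  · rw [Nat.choose_eq_zero_of_lt (not_le.mp h)]
    simp [show s ≠ 0 by omega]

lemma exists_auxPoly {N C₀ L D : ℕ} {F : Fin (N + 1) → PowerSeries ℚ} {c : Fin (N + 1) → ℕ → ℤ}
    (hs : 1 ≤ s) (hC : 1 ≤ C₀) (hN : 1 ≤ N)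
    (hc : ∀ i m, PowerSeries.coeff m (F i) = (c i m : ℚ) / (m.factorial : ℚ) ^ s)
    (hcb : ∀ i m, |c i m| ≤ (C₀ : ℤ) ^ (m + 1)) (hD : 2 * (L + 1) ≤ D) :
    ∃ p : Fin (N + 1) → Fin D → ℤ, p ≠ 0 ∧
      (∀ i j, |p i j| ≤ (((2 ^ (s + 1) * C₀) ^ (2 * (N + 1) ^ 2)) ^ D : ℕ)) ∧
      PowerSeries.X ^ (N * D + L) ∣ linForm F (auxPoly s D p) := by
  set T := N * D + L with hT
  have hTD : T + 1 ≤ (N + 1) * D := by rw [hT, add_mul]; omega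
  let A : Matrix (Fin T) (Fin (N + 1) × Fin D) ℤ :=
    Matrix.of fun m x => (((m : ℕ).choose x.2 : ℕ) : ℤ) ^ s * c x.1 (m - x.2)
  have hT0 : 0 < T := by rw [hT]; have := Nat.mul_le_mul hN (le_refl D); omega
  have hAb : ∀ m x, |A m x| ≤ (((2 ^ s * C₀) ^ ((N + 1) * D) : ℕ) : ℤ) := by
    intro m x
    simp only [A, Matrix.of_apply]
    rw [abs_mul, abs_pow, Nat.abs_cast]
    have hm := m.2
    have h1 : (((m : ℕ).choose x.2 : ℕ) : ℤ) ^ s ≤ (2 ^ s) ^ ((N + 1) * D) := by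
      rw [← pow_mul, mul_comm s, pow_mul]
      gcongr
      exact_mod_cast (Nat.choose_le_two_pow _ _).trans
        (Nat.pow_le_pow_right (by norm_num) (by omega))
    have h2 : |c x.1 (m - x.2)| ≤ (C₀ : ℤ) ^ ((N + 1) * D) :=
      (hcb _ _).trans (pow_le_pow_right₀ (by exact_mod_cast hC) (by omega))
    push_cast
    rw [mul_pow]
    gcongr
  obtain ⟨t, ht, hAt, htb⟩ := exists_int_vec_abs_le A
    (b := (2 ^ s * C₀) ^ ((N + 1) * D)) (e := 2 * (N + 1))
    (Q := 2 ^ ((N + 1) * D) * (2 ^ s * C₀) ^ ((N + 1) * D)) (by simpa using hT0)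
    (by simp; omega) (Nat.one_le_pow _ _ (by positivity)) hAb (by
      simp only [Fintype.card_prod, Fintype.card_fin]
      exact Nat.mul_le_mul_right _ Nat.lt_two_pow_self.le) (by
      simp only [Fintype.card_prod, Fintype.card_fin]
      have : D ≤ 2 * ((N + 1) * D - T) := by rw [hT, add_mul]; omega
      calc T ≤ (N + 1) * D := by omega
        _ ≤ (N + 1) * (2 * ((N + 1) * D - T)) := Nat.mul_le_mul_left _ this
        _ = _ := by ring)
  refine ⟨fun i j => t (i, j), fun h => ht (funext fun x => congrFun (congrFun h x.1) x.2),
    fun i j => (htb (i, j)).trans (le_of_eq ?_), ?_⟩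
  · push_cast
    rw [← mul_pow, ← mul_assoc, ← pow_succ', ← pow_mul, ← pow_mul]
    congr 1
    ring
  · rw [PowerSeries.X_pow_dvd_iff]
    intro m hm
    rw [linForm_auxPoly_coeff hs hc]
    have := congrFun hAt ⟨m, hm⟩
    simp only [Matrix.mulVec, dotProduct, A, Matrix.of_apply, Pi.zero_apply] at this
    rw [this]
    simp

end SiegelForm

/-- The sum at `z` of a formal power series. -/
noncomputable def psEval (z : ℂ) (F : PowerSeries ℚ) : ℂ :=
  ∑' m, ((PowerSeries.coeff m F : ℚ) : ℂ) * z ^ m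

/-- Absolute convergence at `z` of a formal power series. -/
def PSSummable (z : ℂ) (F : PowerSeries ℚ) : Prop :=
  Summable fun m => ‖((PowerSeries.coeff m F : ℚ) : ℂ) * z ^ m‖

section PSEval

variable {z : ℂ} {F G : PowerSeries ℚ}

lemma psCoeff_mul_term (z : ℂ) (F G : PowerSeries ℚ) (m : ℕ) :
    ((PowerSeries.coeff m (F * G) : ℚ) : ℂ) * z ^ m = ∑ kl ∈ antidiagonal m,
      (((PowerSeries.coeff kl.1 F : ℚ) : ℂ) * z ^ kl.1) * (((PowerSeries.coeff kl.2 G : ℚ) : ℂ) * z ^ kl.2) := by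
  rw [PowerSeries.coeff_mul, Rat.cast_sum, sum_mul]
  refine sum_congr rfl fun kl hkl => ?_
  rw [← mem_antidiagonal.mp hkl, pow_add]
  push_cast
  ring

lemma PSSummable.mul (hF : PSSummable z F) (hG : PSSummable z G) : PSSummable z (F * G) := by
  have := summable_norm_sum_mul_antidiagonal_of_summable_norm hF hG
  exact this.congr fun m => by rw [psCoeff_mul_term]

lemma psEval_mul (hF : PSSummable z F) (hG : PSSummable z G) :
    psEval z (F * G) = psEval z F * psEval z G := by
  rw [psEval, psEval, psEval, tsum_mul_tsum_eq_tsum_sum_antidiagonal_of_summable_norm hF hG]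
  exact tsum_congr fun m => psCoeff_mul_term z F G m

lemma PSSummable.add (hF : PSSummable z F) (hG : PSSummable z G) : PSSummable z (F + G) := by
  refine Summable.of_nonneg_of_le (fun _ => norm_nonneg _) (fun m => ?_) (Summable.add hF hG)
  rw [map_add, Rat.cast_add, add_mul]
  exact norm_add_le _ _

lemma psEval_add (hF : PSSummable z F) (hG : PSSummable z G) :
    psEval z (F + G) = psEval z F + psEval z G := by
  rw [psEval, psEval, psEval, ← hF.of_norm.tsum_add hG.of_norm]
  exact tsum_congr fun m => by rw [map_add, Rat.cast_add, add_mul]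

lemma hasFiniteSupport_intPolyToPS (z : ℂ) (p : ℤ[X]) (m : ℕ) (hm : m ∉ range (p.natDegree + 1)) :
    ((PowerSeries.coeff m (intPolyToPS p) : ℚ) : ℂ) * z ^ m = 0 := by
  rw [intPolyToPS_coeff, coeff_eq_zero_of_natDegree_lt (by simpa using hm)]
  simp

lemma psSummable_intPolyToPS (z : ℂ) (p : ℤ[X]) : PSSummable z (intPolyToPS p) :=
  summable_of_ne_finset_zero fun m hm => by
    rw [hasFiniteSupport_intPolyToPS z p m hm, norm_zero]

lemma psEval_intPolyToPS (z : ℂ) (p : ℤ[X]) : psEval z (intPolyToPS p) = aeval z p := by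
  rw [psEval, tsum_eq_sum (hasFiniteSupport_intPolyToPS z p), aeval_eq_sum_range]
  exact sum_congr rfl fun m _ => by simp [intPolyToPS_coeff]

lemma psSummable_zero (z : ℂ) : PSSummable z 0 := by
  simpa using psSummable_intPolyToPS z 0

lemma psEval_zero (z : ℂ) : psEval z 0 = 0 := by
  simpa using psEval_intPolyToPS z 0

lemma psSummable_one (z : ℂ) : PSSummable z 1 := by
  simpa using psSummable_intPolyToPS z 1

lemma psEval_one (z : ℂ) : psEval z 1 = 1 := by
  simpa using psEval_intPolyToPS z 1

lemma PSSummable.pow (hF : PSSummable z F) (n : ℕ) :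
    PSSummable z (F ^ n) ∧ psEval z (F ^ n) = psEval z F ^ n := by
  induction n with
  | zero => simpa using ⟨psSummable_one z, psEval_one z⟩
  | succ n ih => exact ⟨by rw [pow_succ]; exact ih.1.mul hF,
      by rw [pow_succ, psEval_mul ih.1 hF, ih.2, pow_succ]⟩

lemma PSSummable.sum {ι : Type*} (t : Finset ι) {f : ι → PowerSeries ℚ}
    (h : ∀ i ∈ t, PSSummable z (f i)) :
    PSSummable z (∑ i ∈ t, f i) ∧ psEval z (∑ i ∈ t, f i) = ∑ i ∈ t, psEval z (f i) := by
  classical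
  induction t using Finset.induction_on with
  | empty => simpa using ⟨psSummable_zero z, psEval_zero z⟩
  | insert a t ha ih =>
    have ih := ih fun i hi => h i (mem_insert_of_mem hi)
    have ha' := h a (mem_insert_self _ _)
    rw [sum_insert ha, sum_insert ha]
    exact ⟨ha'.add ih.1, by rw [psEval_add ha' ih.1, ih.2]⟩

lemma psEval_linForm {M : ℕ} {F : Fin M → PowerSeries ℚ} (hF : ∀ i, PSSummable z (F i))
    (P : Fin M → ℤ[X]) :
    PSSummable z (linForm F P) ∧ psEval z (linForm F P) = ∑ i, aeval z (P i) * psEval z (F i) := by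
  have h := PSSummable.sum (z := z) univ (f := fun i => intPolyToPS (P i) * F i)
    fun i _ => (psSummable_intPolyToPS z (P i)).mul (hF i)
  refine ⟨h.1, h.2.trans (sum_congr rfl fun i _ => ?_)⟩
  rw [psEval_mul (psSummable_intPolyToPS z _) (hF i), psEval_intPolyToPS]

lemma psSummable_of_bound {c : ℕ → ℤ} {C₀ s : ℕ} (hs : 1 ≤ s)
    (hc : ∀ m, PowerSeries.coeff m F = (c m : ℚ) / (m.factorial : ℚ) ^ s)
    (hcb : ∀ m, |c m| ≤ (C₀ : ℤ) ^ (m + 1)) (z : ℂ) : PSSummable z F := by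
  refine Summable.of_nonneg_of_le (fun _ => norm_nonneg _) (fun m => ?_)
    ((Real.summable_pow_div_factorial (C₀ * ‖z‖)).mul_left (C₀ : ℝ))
  have h1 : (|c m| : ℝ) ≤ (C₀ : ℝ) ^ (m + 1) := by exact_mod_cast hcb m
  have h2 : (m.factorial : ℝ) ≤ (m.factorial : ℝ) ^ s :=
    le_self_pow₀ (by exact_mod_cast Nat.factorial_pos m) (by omega)
  rw [hc, norm_mul, norm_pow]
  push_cast
  rw [norm_div, norm_pow, Complex.norm_natCast, Complex.norm_intCast]
  calc |(c m : ℝ)| / (m.factorial : ℝ) ^ s * ‖z‖ ^ m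
      ≤ (C₀ : ℝ) ^ (m + 1) / m.factorial * ‖z‖ ^ m := by gcongr
    _ = _ := by rw [mul_pow]; ring

/-- Bound for the sum of a power series with a zero of high order at the origin. -/
lemma norm_psEval_le {T s : ℕ} (hs : 1 ≤ s) {Y g : ℝ} (hY : 0 ≤ Y) (hg : 0 ≤ g)
    (hF : PSSummable z F) (hT : ∀ m < T, PowerSeries.coeff m F = 0)
    (hb : ∀ m, ‖((PowerSeries.coeff m F : ℚ) : ℂ) * z ^ m‖ ≤ Y * g ^ m / (m.factorial : ℝ) ^ s) :
    ‖psEval z F‖ ≤ Y * g ^ T / (T.factorial : ℝ) ^ s * Real.exp g := by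
  rw [psEval, ← hF.of_norm.sum_add_tsum_nat_add T, sum_eq_zero, zero_add]
  · have hexp : HasSum (fun n => g ^ n / (n.factorial : ℝ)) (Real.exp g) := by
      rw [Real.exp_eq_exp_ℝ]
      exact NormedSpace.expSeries_div_hasSum_exp g
    refine tsum_of_norm_bounded (hexp.mul_left _) fun i => (hb _).trans ?_
    have h1 : (T.factorial : ℝ) ^ s * i.factorial ≤ ((i + T).factorial : ℝ) ^ s := by
      have h2 : (i.factorial : ℝ) ≤ (i.factorial : ℝ) ^ s :=
        le_self_pow₀ (by exact_mod_cast Nat.factorial_pos i) (by omega)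
      have h3 : (i.factorial : ℝ) * T.factorial ≤ (i + T).factorial := by
        exact_mod_cast Nat.le_of_dvd (Nat.factorial_pos _) (Nat.factorial_mul_factorial_dvd_factorial_add i T)
      calc (T.factorial : ℝ) ^ s * i.factorial ≤ (T.factorial : ℝ) ^ s * (i.factorial : ℝ) ^ s := by gcongr
        _ = ((i.factorial : ℝ) * T.factorial) ^ s := by rw [mul_pow, mul_comm]
        _ ≤ _ := by gcongr
    calc Y * g ^ (i + T) / ((i + T).factorial : ℝ) ^ s
        ≤ Y * g ^ (i + T) / ((T.factorial : ℝ) ^ s * i.factorial) := by gcongr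
      _ = _ := by rw [pow_add]; field_simp
  · intro m hm
    rw [hT m (mem_range.mp hm)]
    simp

end PSEval

section AuxBound

variable {s N C₀ D T : ℕ} {F : Fin (N + 1) → PowerSeries ℚ} {c : Fin (N + 1) → ℕ → ℤ}

lemma abs_coeff_linForm_auxPoly_le (hs : 1 ≤ s)
    (hc : ∀ i m, PowerSeries.coeff m (F i) = (c i m : ℚ) / (m.factorial : ℚ) ^ s)
    (hC : 1 ≤ C₀) (hcb : ∀ i m, |c i m| ≤ (C₀ : ℤ) ^ (m + 1))
    {p : Fin (N + 1) → Fin D → ℤ} {B : ℕ} (hp : ∀ i j, |p i j| ≤ B) (m : ℕ) :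
    |((PowerSeries.coeff m (linForm F (auxPoly s D p)) : ℚ) : ℝ)| ≤
      (D.factorial : ℝ) ^ s * ((N + 1) * D * B * C₀) * (2 ^ s * C₀) ^ m / (m.factorial : ℝ) ^ s := by
  have h : |∑ x : Fin (N + 1) × Fin D, ((m.choose x.2 : ℕ) : ℤ) ^ s * c x.1 (m - x.2) * p x.1 x.2| ≤
      (((N + 1) * D * ((2 ^ m) ^ s * C₀ ^ (m + 1) * B) : ℕ) : ℤ) := by
    refine (abs_sum_le_sum_abs _ _).trans ((sum_le_card_nsmul _ _
      ((2 ^ m) ^ s * (C₀ : ℤ) ^ (m + 1) * B) fun x _ => ?_).trans (by simp))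
    rw [abs_mul, abs_mul, abs_pow, Nat.abs_cast]
    gcongr
    · exact_mod_cast Nat.choose_le_two_pow m _
    · exact (hcb _ _).trans (pow_le_pow_right₀ (by exact_mod_cast hC) (by omega))
    · exact hp _ _
  rw [linForm_auxPoly_coeff hs hc]
  push_cast
  rw [abs_mul, abs_of_nonneg (by positivity : (0 : ℝ) ≤ ((D.factorial : ℝ) / m.factorial) ^ s)]
  have h' := (Int.cast_le (R := ℝ)).mpr h
  push_cast at h'
  calc _ ≤ ((D.factorial : ℝ) / m.factorial) ^ s * ((N + 1) * D * ((2 ^ m) ^ s * C₀ ^ (m + 1) * B)) := by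
        gcongr
    _ = _ := by rw [← pow_mul, mul_comm m s, pow_mul, mul_pow, div_pow]; ring

/-- Upper bound for the derivatives of the auxiliary linear form. -/
lemma norm_psEval_iterate_le (hs : 1 ≤ s)
    (hc : ∀ i m, PowerSeries.coeff m (F i) = (c i m : ℚ) / (m.factorial : ℚ) ^ s)
    (hC : 1 ≤ C₀) (hcb : ∀ i m, |c i m| ≤ (C₀ : ℤ) ^ (m + 1))
    {p : Fin (N + 1) → Fin D → ℤ} {B : ℕ} (hp : ∀ i j, |p i j| ≤ B)
    (hT : PowerSeries.X ^ T ∣ linForm F (auxPoly s D p)) (k : ℕ) (z : ℂ)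
    (hsum : PSSummable z (psEuler^[k] (linForm F (auxPoly s D p)))) :
    ‖psEval z (psEuler^[k] (linForm F (auxPoly s D p)))‖ ≤
      k.factorial * ((D.factorial : ℝ) ^ s * ((N + 1) * D * B * C₀)) *
        (Real.exp 1 * (2 ^ s * C₀) * ‖z‖) ^ T / (T.factorial : ℝ) ^ s *
        Real.exp (Real.exp 1 * (2 ^ s * C₀) * ‖z‖) := by
  refine norm_psEval_le hs (by positivity) (by positivity) hsum (fun m hm => ?_) fun m => ?_
  · rw [psEuler_iterate_coeff, PowerSeries.X_pow_dvd_iff.mp hT m hm, mul_zero]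
  · have h1 : (m : ℝ) ^ k ≤ k.factorial * Real.exp 1 ^ m := by
      have := Real.pow_div_factorial_le_exp (m : ℝ) (by positivity) k
      rw [div_le_iff₀ (by positivity)] at this
      rw [Real.exp_one_pow]
      linarith
    have h2 := abs_coeff_linForm_auxPoly_le hs hc hC hcb hp m
    rw [psEuler_iterate_coeff, norm_mul, norm_pow]
    push_cast
    rw [norm_mul, norm_pow, Complex.norm_natCast, Complex.norm_ratCast]
    calc _ ≤ (k.factorial * Real.exp 1 ^ m) * ((D.factorial : ℝ) ^ s * ((N + 1) * D * B * C₀) *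
          (2 ^ s * C₀) ^ m / (m.factorial : ℝ) ^ s) * ‖z‖ ^ m := by gcongr
      _ = _ := by rw [mul_pow, mul_pow]; ring

end AuxBound

section House

variable {K : Type*} [Field K] [NumberField K]

lemma one_le_norm_mul_house_pow (σ : K →+* ℂ) {α : K} (hα : IsIntegral ℤ α) (h0 : α ≠ 0) :
    1 ≤ ‖σ α‖ * NumberField.house α ^ (Module.finrank ℚ K - 1) := by
  refine le_trans ?_ (NumberField.norm_norm_le_norm_mul_house_pow α σ)
  obtain ⟨n, hn⟩ := IsIntegrallyClosed.isIntegral_iff.mp (Algebra.isIntegral_norm ℚ hα)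
  have hn0 : n ≠ 0 := by
    rintro rfl
    exact h0 (Algebra.norm_eq_zero_iff.mp (by rw [← hn]; simp))
  rw [← hn]
  simp only [algebraMap_int_eq, eq_intCast, Int.norm_cast_rat, Int.norm_eq_abs]
  exact_mod_cast Int.one_le_abs hn0

lemma house_aeval_le (ζ : K) {ρ : ℝ} (hρ : 1 ≤ ρ) (hζ : NumberField.house ζ ≤ ρ) {Q : ℤ[X]}
    {d : ℕ} {B : ℝ} (hd : Q.natDegree ≤ d) (hB : ∀ n, (|Q.coeff n| : ℝ) ≤ B) :
    NumberField.house (aeval ζ Q) ≤ (d + 1) * (B * ρ ^ d) := by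
  have hB0 : 0 ≤ B := (abs_nonneg _).trans (hB 0)
  rw [aeval_eq_sum_range' (Nat.lt_succ_of_le hd)]
  refine (NumberField.house_sum_le_sum_house _ _).trans ?_
  refine (sum_le_card_nsmul _ _ (B * ρ ^ d) fun j hj => ?_).trans (by simp)
  rw [zsmul_eq_mul]
  refine (NumberField.house_mul_le _ _).trans ?_
  rw [NumberField.house_intCast]
  refine mul_le_mul (by simpa using hB j) ?_ (NumberField.house_nonneg _) hB0
  exact (NumberField.house_pow_le _ _).trans ((pow_le_pow_left₀ (NumberField.house_nonneg _) hζ j).trans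
    (pow_le_pow_right₀ hρ (Nat.lt_succ_iff.mp (mem_range.mp hj))))

/-- Liouville's inequality for linear forms in `v` with integer polynomial coefficients
evaluated at `ζ`. -/
lemma exists_liouville (σ : K →+* ℂ) {M : ℕ} (ζ : K) (v : Fin M → K) :
    ∃ R : ℝ, 1 ≤ R ∧ ∀ (d : ℕ) (B : ℝ) (Q : Fin M → ℤ[X]), (∀ i, (Q i).natDegree ≤ d) →
      (∀ i n, (|(Q i).coeff n| : ℝ) ≤ B) → 1 ≤ B → ∑ i, aeval ζ (Q i) * v i ≠ 0 →
      1 ≤ R ^ (d + 1) * B ^ (Module.finrank ℚ K - 1) * ‖σ (∑ i, aeval ζ (Q i) * v i)‖ := by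
  classical
  obtain ⟨q, hq0, hq⟩ := exists_integral_multiples ℤ ℚ (L := K) (insert ζ (univ.image v))
  have hqζ : IsIntegral ℤ (q * ζ) := by
    simpa using hq ζ (mem_insert_self _ _)
  have hqv : ∀ i, IsIntegral ℤ (q * v i) := fun i => by
    simpa using hq (v i) (mem_insert_of_mem (mem_image_of_mem _ (mem_univ i)))
  set ρ : ℝ := max 1 (NumberField.house ζ)
  have hρ1 : 1 ≤ ρ := le_max_left _ _
  set V : ℝ := 1 + ∑ i, NumberField.house (v i)
  have hV : ∀ i, NumberField.house (v i) ≤ V := fun i =>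
    (single_le_sum (fun i _ => NumberField.house_nonneg (v i)) (mem_univ i)).trans (by simp [V])
  have hV1 : 1 ≤ V := by
    simp only [V, le_add_iff_nonneg_right]
    exact sum_nonneg fun i _ => NumberField.house_nonneg _
  set a : ℝ := |(q : ℝ)|
  have ha1 : 1 ≤ a := by
    have := Int.one_le_abs hq0
    simp only [a]
    exact_mod_cast this
  set S : ℝ := a * 2 * (M + 1) * ρ * V
  have hS1 : 1 ≤ S := by
    have : (1 : ℝ) ≤ M + 1 := by simp
    have h2 : 1 ≤ a * 2 := by linarith
    exact one_le_mul_of_one_le_of_one_le (one_le_mul_of_one_le_of_one_le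
      (one_le_mul_of_one_le_of_one_le h2 this) hρ1) hV1
  set n := Module.finrank ℚ K - 1
  refine ⟨a * S ^ n, one_le_mul_of_one_le_of_one_le ha1 (one_le_pow₀ hS1), ?_⟩
  intro d B Q hd hB hB1 h0
  set l := ∑ i, aeval ζ (Q i) * v i
  have hint : IsIntegral ℤ ((q : K) ^ (d + 1) * l) := by
    have h1 : ∀ i, IsIntegral ℤ ((q : K) ^ d * aeval ζ (Q i)) := by
      intro i
      rw [aeval_eq_sum_range' (Nat.lt_succ_of_le (hd i)), mul_sum]
      refine IsIntegral.sum _ fun j hj => ?_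
      have hj : j ≤ d := Nat.lt_succ_iff.mp (mem_range.mp hj)
      have : (q : K) ^ d * ((Q i).coeff j • ζ ^ j) =
          (((Q i).coeff j * q ^ (d - j) : ℤ) : K) * (q * ζ) ^ j := by
        rw [zsmul_eq_mul, mul_pow, ← Nat.sub_add_cancel hj, pow_add]
        push_cast
        simp only [Nat.sub_add_cancel hj]
        ring
      rw [this]
      exact (isIntegral_algebraMap (R := ℤ) (A := K)).mul (hqζ.pow j)
    have : (q : K) ^ (d + 1) * l = ∑ i, ((q : K) ^ d * aeval ζ (Q i)) * (q * v i) := by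
      rw [mul_sum]
      exact sum_congr rfl fun i _ => by ring
    rw [this]
    exact IsIntegral.sum _ fun i _ => (h1 i).mul (hqv i)
  have hq0' : (q : K) ≠ 0 := by exact_mod_cast hq0
  have hmain := one_le_norm_mul_house_pow σ hint (mul_ne_zero (pow_ne_zero _ hq0') h0)
  have hl : NumberField.house l ≤ M * ((d + 1) * (B * ρ ^ d) * V) := by
    refine (NumberField.house_sum_le_sum_house _ _).trans ?_
    refine (sum_le_card_nsmul _ _ ((d + 1) * (B * ρ ^ d) * V) fun i _ => ?_).trans (by simp)
    refine (NumberField.house_mul_le _ _).trans (mul_le_mul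
      (house_aeval_le ζ hρ1 (le_max_right _ _) (hd i) (hB i)) (hV i) (NumberField.house_nonneg _) ?_)
    positivity
  have hhouse : NumberField.house ((q : K) ^ (d + 1) * l) ≤ S ^ (d + 1) * B := by
    have h1 : NumberField.house ((q : K) ^ (d + 1)) ≤ a ^ (d + 1) := by
      refine (NumberField.house_pow_le _ _).trans ?_
      rw [NumberField.house_intCast]
      simp [a]
    have hd2 : ((d : ℝ) + 1) ≤ 2 ^ (d + 1) := by exact_mod_cast (Nat.lt_two_pow_self (n := d + 1)).le
    have hM2 : (M : ℝ) ≤ (M + 1) ^ (d + 1) :=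
      le_trans (by linarith) (le_self_pow₀ (by simp) d.succ_ne_zero)
    calc _ ≤ _ := NumberField.house_mul_le _ _
      _ ≤ a ^ (d + 1) * (M * ((d + 1) * (B * ρ ^ d) * V)) :=
        mul_le_mul h1 hl (NumberField.house_nonneg _) (by positivity)
      _ ≤ a ^ (d + 1) * ((M + 1) ^ (d + 1) * (2 ^ (d + 1) * (B * ρ ^ (d + 1)) * V ^ (d + 1))) := by
        gcongr
        · exact d.le_succ
        · exact le_self_pow₀ hV1 d.succ_ne_zero
      _ = _ := by simp only [S, mul_pow]; ring
  clear_value S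
  calc (1 : ℝ) ≤ _ := hmain
    _ ≤ ‖σ ((q : K) ^ (d + 1) * l)‖ * (S ^ (d + 1) * B) ^ n := by
      gcongr
      exact NumberField.house_nonneg _
    _ = _ := by
      rw [map_mul, map_pow, map_intCast, norm_mul, norm_pow, Complex.norm_intCast, mul_pow, mul_pow,
        ← pow_mul, ← pow_mul, mul_comm n]
      simp only [a]
      ring

end House

lemma factorial_pow_le_factorial_mul_add (D N L : ℕ) :
    D.factorial ^ N ≤ (N * D + L).factorial := by
  refine le_trans ?_ (Nat.factorial_le (Nat.le_add_right _ L))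
  induction N with
  | zero => simp
  | succ N ih =>
    rw [pow_succ, add_mul, one_mul]
    exact (Nat.mul_le_mul_right _ ih).trans (Nat.le_of_dvd (Nat.factorial_pos _)
      (Nat.factorial_mul_factorial_dvd_factorial_add _ _))

lemma exists_linear_pow_le_factorial (b : ℕ) :
    ∃ c : ℝ, 1 ≤ c ∧ ∀ D : ℕ, 1 ≤ D →
      (2 * D + b : ℝ) ^ (D + b) ≤ c ^ D * D.factorial := by
  refine ⟨(2 + b) ^ (1 + b) * Real.exp 1 * 2 ^ b, ?_, fun D hD => ?_⟩
  · refine one_le_mul_of_one_le_of_one_le (one_le_mul_of_one_le_of_one_le ?_ ?_) ?_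
    · exact one_le_pow₀ (by have : (0 : ℝ) ≤ b := by positivity
                            linarith)
    · exact Real.one_le_exp (by norm_num)
    · exact one_le_pow₀ (by norm_num)
  have hD' : (1 : ℝ) ≤ D := by exact_mod_cast hD
  have h1 : (2 * D + b : ℝ) ≤ (2 + b) * D := by
    have : (0 : ℝ) ≤ b := by positivity
    nlinarith
  have h2 : (D : ℝ) ^ D ≤ Real.exp 1 ^ D * D.factorial := by
    have := Real.pow_div_factorial_le_exp (D : ℝ) (by positivity) D
    rw [div_le_iff₀ (by positivity)] at this
    rwa [Real.exp_one_pow]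
  have h3 : (D : ℝ) ≤ 2 ^ D := by exact_mod_cast Nat.lt_two_pow_self.le
  have h4 : D + b ≤ (1 + b) * D := by nlinarith
  have h5 : (1 : ℝ) ≤ 2 + b := by
    have : (0 : ℝ) ≤ b := by positivity
    linarith
  calc (2 * D + b : ℝ) ^ (D + b) ≤ ((2 + b) * D) ^ (D + b) := by gcongr
    _ = (2 + b) ^ (D + b) * ((D : ℝ) ^ D * (D : ℝ) ^ b) := by rw [mul_pow, pow_add (D : ℝ)]
    _ ≤ (2 + b) ^ ((1 + b) * D) * ((Real.exp 1 ^ D * D.factorial) * (2 ^ D) ^ b) := by gcongr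
    _ = _ := by rw [mul_pow, mul_pow, ← pow_mul, ← pow_mul, ← pow_mul, mul_comm b D]; ring

lemma pow_affine_le {x : ℝ} (hx : 1 ≤ x) {a b D m : ℕ} (hD : 1 ≤ D) (hm : m ≤ a * D + b) :
    x ^ m ≤ (x ^ (a + b)) ^ D := by
  rw [← pow_mul]
  exact pow_le_pow_right₀ hx (by nlinarith)

section Siegel

variable {N s C₀ a : ℕ} {A : Matrix (Fin (N + 1)) (Fin (N + 1)) ℤ[X]}
  {F : Fin (N + 1) → PowerSeries ℚ} {c : Fin (N + 1) → ℕ → ℤ}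

/-- The nonvanishing values produced by the auxiliary construction. -/
lemma exists_small_value (hs : 1 ≤ s) (hC : 1 ≤ C₀) (hN : 1 ≤ N)
    (hA : ∀ i j, (A i j).natDegree ≤ 1) (ha : ∀ i j n, |(A i j).coeff n| ≤ a)
    (hF : ∀ j, psEuler (F j) = ∑ i, intPolyToPS (A j i) * F i) (hunit : ∃ i, IsUnit (F i))
    (hc : ∀ i m, PowerSeries.coeff m (F i) = (c i m : ℚ) / (m.factorial : ℚ) ^ s)
    (hcb : ∀ i m, |c i m| ≤ (C₀ : ℤ) ^ (m + 1))
    {L : ℕ} (hL : ∀ (D : ℕ) (P : Fin (N + 1) → ℤ[X]), 1 ≤ D → (∀ i, (P i).natDegree ≤ D - 1) →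
      P ≠ 0 → PowerSeries.X ^ (N * D + L) ∣ linForm F P →
        (connMatrix (polyEuler ℤ) A P).det ≠ 0)
    {z : ℂ} (hz : z ≠ 0) {v : Fin (N + 1) → ℂ} (hv : v ≠ 0) {γ : ℂ}
    (hval : ∀ i, psEval z (F i) = γ * v i) :
    ∃ (b : ℕ) (H g : ℝ), 1 ≤ H ∧ 1 ≤ g ∧ ∀ D, 2 * (L + 1) ≤ D →
      ∃ (k : ℕ) (Q : Fin (N + 1) → ℤ[X]), k ≤ D + b ∧ (∀ i, (Q i).natDegree ≤ 2 * D + b) ∧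
        (∀ i n, (|(Q i).coeff n| : ℝ) ≤ (2 * D + b) ^ k * (H ^ D * (D.factorial : ℝ) ^ s)) ∧
        ∑ i, aeval z (Q i) * v i ≠ 0 ∧
        ‖γ‖ * ‖∑ i, aeval z (Q i) * v i‖ ≤ k.factorial * ((D.factorial : ℝ) ^ s *
          ((N + 1) * D * H ^ D * C₀)) * g ^ (N * D + L) / ((N * D + L).factorial : ℝ) ^ s *
            Real.exp g := by
  set H₀ : ℕ := (2 ^ (s + 1) * C₀) ^ (2 * (N + 1) ^ 2)
  set g : ℝ := max 1 (Real.exp 1 * (2 ^ s * C₀) * ‖z‖)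
  refine ⟨(N + 1) ^ 2 + 1 + 2 * (N + 1) * a, H₀, g, ?_, le_max_left _ _, fun D hD => ?_⟩
  · exact_mod_cast Nat.one_le_pow _ _ (by positivity)
  obtain ⟨p, hp0, hp, hX⟩ := exists_auxPoly (L := L) (D := D) hs hC hN hc hcb hD
  set P := auxPoly s D p
  set T := N * D + L with hT
  have hPd : ∀ i, (P i).natDegree ≤ D - 1 := auxPoly_natDegree_le s D p
  have hdet := hL D P (by omega) hPd (auxPoly_ne_zero s D hp0) hX
  obtain ⟨D', rfl⟩ : ∃ D', D = D' + 1 := ⟨D - 1, by omega⟩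
  simp only [Nat.add_sub_cancel] at hPd
  obtain ⟨k, hk, hne⟩ := exists_conn_iterate_eval_ne_zero (K := (N + 1) * (D' + (N + 1)) + 1 - T)
    hF hA hunit hPd hX hdet hz hv (by omega)
  have hkb : k ≤ D' + 1 + ((N + 1) ^ 2 + 1) := by
    have h1 : (N + 1) * (D' + (N + 1)) + 1 - T + (N + 1) ≤ D' + 1 + ((N + 1) ^ 2 + 1) := by
      have : (N + 1) * (D' + (N + 1)) + 1 + (N + 1) ≤ T + (D' + 1 + ((N + 1) ^ 2 + 1)) := by
        rw [hT]; nlinarith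
      have h2 : (N + 1) ≤ D' + 1 + ((N + 1) ^ 2 + 1) := by nlinarith
      omega
    omega
  refine ⟨k, _, by omega, fun i => (natDegree_conn_iterate_le hA hPd k i).trans (by omega),
    fun i n => ?_, hne, ?_⟩
  · have h := abs_coeff_conn_iterate_le hA ha hPd (abs_auxPoly_coeff_le s (D' + 1) hp) k
      (W := 2 * (D' + 1 : ℕ) + ((N + 1) ^ 2 + 1 + 2 * (N + 1) * a : ℕ)) (by
        have : (k : ℤ) ≤ D' + 1 + ((N + 1) ^ 2 + 1) := by exact_mod_cast hkb
        push_cast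
        linarith) i n
    have h' := (Int.cast_le (R := ℝ)).mpr h
    push_cast [H₀] at h' ⊢
    exact h'
  · have hsum : ∀ i, PSSummable z (F i) := fun i => psSummable_of_bound hs (hc i) (hcb i) z
    have hit := psEuler_iterate_linForm A hF P k
    have hev := psEval_linForm hsum ((conn (polyEuler ℤ) A)^[k] P)
    have h1 : psEval z (psEuler^[k] (linForm F P)) =
        γ * ∑ i, aeval z ((conn (polyEuler ℤ) A)^[k] P i) * v i := by
      rw [hit, hev.2, mul_sum]
      exact sum_congr rfl fun i _ => by rw [hval]; ring
    rw [← norm_mul, ← h1]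
    refine (norm_psEval_iterate_le hs hc hC hcb hp hX k z (by rw [hit]; exact hev.1)).trans ?_
    have hg : Real.exp 1 * (2 ^ s * C₀) * ‖z‖ ≤ g := le_max_right _ _
    push_cast
    gcongr
    exact le_of_eq (by simp [H₀])

/-- Values of a system of power series satisfying a zero estimate cannot be proportional to
elements of a number field of small degree. -/
theorem eq_zero_of_psEval_eq_mul {K : Type*} [Field K] [NumberField K] (σ : K →+* ℂ)
    (hs : 1 ≤ s) (hC : 1 ≤ C₀) (hN : Module.finrank ℚ K * (s + 1) + 1 ≤ N * s)
    (hA : ∀ i j, (A i j).natDegree ≤ 1) (ha : ∀ i j n, |(A i j).coeff n| ≤ a)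
    (hF : ∀ j, psEuler (F j) = ∑ i, intPolyToPS (A j i) * F i) (hunit : ∃ i, IsUnit (F i))
    (hc : ∀ i m, PowerSeries.coeff m (F i) = (c i m : ℚ) / (m.factorial : ℚ) ^ s)
    (hcb : ∀ i m, |c i m| ≤ (C₀ : ℤ) ^ (m + 1))
    {L : ℕ} (hL : ∀ (D : ℕ) (P : Fin (N + 1) → ℤ[X]), 1 ≤ D → (∀ i, (P i).natDegree ≤ D - 1) →
      P ≠ 0 → PowerSeries.X ^ (N * D + L) ∣ linForm F P →
        (connMatrix (polyEuler ℤ) A P).det ≠ 0)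
    {ζ : K} (hζ : ζ ≠ 0) {v : Fin (N + 1) → K} (hv : v ≠ 0) {γ : ℂ}
    (hval : ∀ i, psEval (σ ζ) (F i) = γ * σ (v i)) : γ = 0 := by
  have hN1 : 1 ≤ N := by
    by_contra h
    simp [show N = 0 by omega] at hN
  have hv' : (fun i => σ (v i)) ≠ 0 := fun h => hv (funext fun i =>
    σ.injective (by simpa using congrFun h i))
  obtain ⟨b, H, g, hH, hg, hmain⟩ := exists_small_value hs hC hN1 hA ha hF hunit hc hcb hL
    ((map_ne_zero σ).mpr hζ) hv' hval
  obtain ⟨R, hR, hliou⟩ := exists_liouville σ ζ v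
  obtain ⟨c₁, hc₁, hlin⟩ := exists_linear_pow_le_factorial b
  have hfin : 0 < Module.finrank ℚ K := Module.finrank_pos
  obtain ⟨n, hn⟩ : ∃ n, Module.finrank ℚ K = n + 1 := ⟨_, (Nat.succ_pred_eq_of_pos hfin).symm⟩
  set E : ℝ := R ^ (2 + (b + 1)) * (c₁ * H) ^ n * c₁ * ((N + 1) * 2 * H * C₀) * g ^ (N + L) *
    Real.exp g with hE
  have hC' : (1 : ℝ) ≤ C₀ := by exact_mod_cast hC
  have hbound : ∀ D : ℕ, 2 * (L + 1) ≤ D → ‖γ‖ ≤ E ^ D / D.factorial := by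
    intro D hD
    have hD1 : 1 ≤ D := by omega
    have hD1' : (1 : ℝ) ≤ D := by exact_mod_cast hD1
    obtain ⟨k, Q, hk, hQd, hQc, hne, hsmall⟩ := hmain D hD
    set f : ℝ := (D.factorial : ℝ)
    have hf : 1 ≤ f := Nat.one_le_cast.mpr (Nat.factorial_pos D)
    have hbase : (1 : ℝ) ≤ 2 * D + b := by
      have : (0 : ℝ) ≤ b := by positivity
      linarith
    have hWk : (2 * D + b : ℝ) ^ k ≤ c₁ ^ D * f :=
      (pow_le_pow_right₀ hbase hk).trans (hlin D hD1)
    have hkf : (k.factorial : ℝ) ≤ c₁ ^ D * f := by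
      refine le_trans ?_ hWk
      have h1 : (k.factorial : ℝ) ≤ (k : ℝ) ^ k := by exact_mod_cast Nat.factorial_le_pow k
      refine h1.trans (pow_le_pow_left₀ (by positivity) ?_ k)
      have : (k : ℝ) ≤ D + b := by exact_mod_cast hk
      linarith
    set B : ℝ := (2 * D + b) ^ k * (H ^ D * f ^ s) with hB
    have hB1 : 1 ≤ B := one_le_mul_of_one_le_of_one_le (one_le_pow₀ hbase)
      (one_le_mul_of_one_le_of_one_le (one_le_pow₀ hH) (one_le_pow₀ hf))
    have hBle : B ≤ (c₁ * H) ^ D * f ^ (s + 1) :=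
      calc B ≤ (c₁ ^ D * f) * (H ^ D * f ^ s) := by rw [hB]; gcongr
        _ = _ := by rw [mul_pow, pow_succ]; ring
    have hsum : σ (∑ i, aeval ζ (Q i) * v i) = ∑ i, aeval (σ ζ) (Q i) * σ (v i) := by
      rw [map_sum]
      refine sum_congr rfl fun i _ => ?_
      rw [map_mul, aeval_def, aeval_def, hom_eval₂,
        show σ.comp (algebraMap ℤ K) = algebraMap ℤ ℂ from RingHom.ext_int _ _]
    have hl := hliou (2 * D + b) B Q hQd hQc hB1 (fun h => hne (by rw [← hsum, h, map_zero]))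
    rw [hsum, hn, Nat.add_sub_cancel] at hl
    set l := ‖∑ i, aeval (σ ζ) (Q i) * σ (v i)‖
    have hT : (f ^ N) ^ s ≤ ((N * D + L).factorial : ℝ) ^ s := by
      gcongr
      simp only [f]
      exact_mod_cast factorial_pow_le_factorial_mul_add D N L
    have hD2 : (D : ℝ) ≤ 2 ^ D := by exact_mod_cast Nat.lt_two_pow_self.le
    have hpow : ∀ x : ℝ, 1 ≤ x → x ≤ x ^ D := fun x hx => le_self_pow₀ hx (by omega)
    have hN' : ((N : ℝ) + 1) ≤ (N + 1) ^ D := hpow _ (by simp)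
    calc ‖γ‖ ≤ ‖γ‖ * (R ^ (2 * D + b + 1) * B ^ n * l) :=
          le_mul_of_one_le_right (norm_nonneg _) hl
      _ = R ^ (2 * D + b + 1) * B ^ n * (‖γ‖ * l) := by ring
      _ ≤ R ^ (2 * D + b + 1) * B ^ n * (k.factorial * (f ^ s * ((N + 1) * D * H ^ D * C₀)) *
          g ^ (N * D + L) / ((N * D + L).factorial : ℝ) ^ s * Real.exp g) := by gcongr
      _ ≤ (R ^ (2 + (b + 1))) ^ D * ((c₁ * H) ^ D * f ^ (s + 1)) ^ n *
          ((c₁ ^ D * f) * (f ^ s * ((N + 1) ^ D * 2 ^ D * H ^ D * C₀ ^ D)) *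
          (g ^ (N + L)) ^ D / (f ^ N) ^ s * Real.exp g ^ D) := by
        gcongr
        · exact pow_affine_le hR hD1 le_rfl
        · exact hpow _ hC'
        · exact pow_affine_le hg hD1 le_rfl
        · exact hpow _ (Real.one_le_exp (by linarith))
      _ = E ^ D * (f ^ (Module.finrank ℚ K * (s + 1)) / f ^ (N * s)) := by
        rw [hn, hE]
        simp only [mul_pow, ← pow_mul]
        rw [show (n + 1) * (s + 1) = (s + 1) * n + 1 + s by ring, pow_add, pow_add, pow_one,
          mul_comm n D]
        ring
      _ ≤ E ^ D * (f ^ (Module.finrank ℚ K * (s + 1)) / f ^ (Module.finrank ℚ K * (s + 1) + 1)) := by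
        gcongr
      _ = E ^ D / f := by
        rw [pow_succ]
        field_simp
  have hlim := (FloorSemiring.tendsto_pow_div_factorial_atTop E)
  have : ‖γ‖ ≤ 0 := ge_of_tendsto hlim (Filter.eventually_atTop.mpr ⟨_, hbound⟩)
  simpa using this

end Siegel

section Exponential

/-- The power series of `exp (a t)`. -/
noncomputable def expSeries (a : ℕ) : PowerSeries ℚ :=
  PowerSeries.mk fun m => (a : ℚ) ^ m / m.factorial

lemma psEuler_expSeries (a : ℕ) :
    psEuler (expSeries a) = intPolyToPS (C (a : ℤ) * X) * expSeries a := by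
  have h : intPolyToPS (C (a : ℤ) * X) = PowerSeries.C (a : ℚ) * PowerSeries.X := by
    ext n
    rw [intPolyToPS_coeff, PowerSeries.coeff_C_mul, PowerSeries.coeff_X, coeff_C_mul, coeff_X]
    simp [eq_comm]
  ext m
  rw [psEuler_coeff, h, mul_assoc, PowerSeries.coeff_C_mul, expSeries]
  cases m with
  | zero => simp
  | succ m =>
    rw [PowerSeries.coeff_succ_X_mul, PowerSeries.coeff_mk, PowerSeries.coeff_mk,
      Nat.factorial_succ]
    push_cast
    field_simp
    exact pow_succ' _ _

lemma isUnit_expSeries (a : ℕ) : IsUnit (expSeries a) := by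
  rw [PowerSeries.isUnit_iff_constantCoeff, expSeries]
  simp [← PowerSeries.coeff_zero_eq_constantCoeff_apply]

/-- The matrix of the differential system satisfied by exponentials. -/
noncomputable def expMatrix {M : ℕ} (a : Fin M → ℕ) : Matrix (Fin M) (Fin M) ℤ[X] :=
  Matrix.diagonal fun i => C (a i : ℤ) * X

lemma psEuler_exp_system {M : ℕ} (a : Fin M → ℕ) (j : Fin M) :
    psEuler (expSeries (a j)) = ∑ i, intPolyToPS (expMatrix a j i) * expSeries (a i) := by
  rw [psEuler_expSeries, sum_eq_single j]
  · simp [expMatrix]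
  · intro i _ hi
    rw [expMatrix, Matrix.diagonal_apply_ne' _ hi]
    simp
  · simp

lemma natDegree_expMatrix_le {M : ℕ} (a : Fin M → ℕ) (i j : Fin M) :
    (expMatrix a i j).natDegree ≤ 1 := by
  rw [expMatrix, Matrix.diagonal_apply]
  split_ifs
  · exact (natDegree_C_mul_le _ _).trans natDegree_X_le
  · simp

lemma dualConn_expMatrix {M : ℕ} (a : Fin M → ℕ) (u : Fin M → ℤ[X]) (j : Fin M) :
    dualConn (polyEuler ℤ) (expMatrix a) u j = polyEuler ℤ (u j) - C (a j : ℤ) * X * u j := by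
  rw [dualConn, sum_eq_single j]
  · simp [expMatrix]
  · intro i _ hi
    rw [expMatrix, Matrix.diagonal_apply_ne' _ hi]
    simp
  · simp

lemma eq_of_exp_wronskian_eq_zero {p q : ℤ[X]} (hp : p ≠ 0) (hq : q ≠ 0) {a b : ℕ}
    (h : p * (polyEuler ℤ q - C (b : ℤ) * X * q) = (polyEuler ℤ p - C (a : ℤ) * X * p) * q) :
    a = b := by
  have h1 : (p * polyEuler ℤ q - polyEuler ℤ p * q).natDegree ≤ p.natDegree + q.natDegree := by
    refine (natDegree_sub_le _ _).trans (max_le ?_ ?_)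
    · exact natDegree_mul_le.trans (by gcongr; exact natDegree_polyEuler_le q)
    · exact natDegree_mul_le.trans (by gcongr; exact natDegree_polyEuler_le p)
  have h2 : p * polyEuler ℤ q - polyEuler ℤ p * q = C ((b : ℤ) - a) * (p * q) * X := by
    rw [C_sub]; linear_combination h
  have h3 := congrArg (fun r => coeff r (p.natDegree + q.natDegree + 1)) h2
  simp only [coeff_mul_X, coeff_C_mul, coeff_mul_degree_add_degree] at h3
  rw [coeff_eq_zero_of_natDegree_lt (by omega)] at h3
  have h4 := (mul_eq_zero.mp h3.symm).resolve_right
    (mul_ne_zero (leadingCoeff_ne_zero.mpr hp) (leadingCoeff_ne_zero.mpr hq))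
  omega

lemma det_exp_ne_zero {M : ℕ} {a : Fin M → ℕ} (ha : Function.Injective a)
    {P : Fin M → ℤ[X]} (hP : ∀ i, P i ≠ 0) :
    (connMatrix (polyEuler ℤ) (expMatrix a) P).det ≠ 0 := by
  classical
  intro hdet
  obtain ⟨u, hu, hann⟩ := exists_annihilator polyEuler_mul (expMatrix a) P hdet
  have key : ∀ n, ∀ u : Fin M → ℤ[X], (univ.filter fun i => u i ≠ 0).card = n →
      (∀ k, u ⬝ᵥ (conn (polyEuler ℤ) (expMatrix a))^[k] P = 0) → u = 0 := by
    intro n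
    induction n using Nat.strong_induction_on with
    | _ n ih =>
      intro u hn hu
      by_contra hne
      obtain ⟨i₀, hi₀⟩ := Function.ne_iff.mp hne
      simp only [Pi.zero_apply] at hi₀
      set u' := dualConn (polyEuler ℤ) (expMatrix a) u with hu'
      have hdual : ∀ k, u' ⬝ᵥ (conn (polyEuler ℤ) (expMatrix a))^[k] P = 0 := by
        intro k
        have := derivation_dotProduct polyEuler_mul (expMatrix a) u
          ((conn (polyEuler ℤ) (expMatrix a))^[k] P)
        rw [hu k, map_zero, ← Function.iterate_succ_apply' (conn (polyEuler ℤ) (expMatrix a)),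
          hu (k + 1), add_zero] at this
        exact this.symm
      have hw0 : u i₀ • u' - u' i₀ • u = 0 := by
        refine ih _ ?_ _ rfl fun k => ?_
        · rw [← hn]
          refine card_lt_card (ssubset_of_subset_of_ne (fun i hi => ?_) fun h => ?_)
          · simp only [mem_filter, mem_univ, true_and, Pi.sub_apply, Pi.smul_apply, smul_eq_mul] at hi ⊢
            intro h0
            refine hi ?_
            rw [hu', dualConn_expMatrix, h0]
            simp
          · have : i₀ ∈ univ.filter fun i => u i ≠ 0 := by simpa using hi₀
            rw [← h] at this
            simp [mul_comm] at this
        · rw [sub_dotProduct, smul_dotProduct, smul_dotProduct, hdual, hu]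
          simp
      have hsupp : ∀ j, j ≠ i₀ → u j = 0 := by
        intro j hj
        by_contra hj0
        have h := congrFun hw0 j
        simp only [Pi.sub_apply, Pi.smul_apply, smul_eq_mul, Pi.zero_apply, sub_eq_zero, hu',
          dualConn_expMatrix] at h
        exact hj (ha (eq_of_exp_wronskian_eq_zero hi₀ hj0 h)).symm
      have h0 := hu 0
      rw [Function.iterate_zero, id, dotProduct, sum_eq_single i₀ (fun j _ hj => by
        rw [hsupp j hj, zero_mul]) (by simp)] at h0
      exact (mul_ne_zero hi₀ (hP i₀)) h0
  exact hu (key _ u rfl hann)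

/-- Zero estimate for exponential polynomials. -/
lemma exp_zero_estimate {N D : ℕ} {P : Fin (N + 1) → ℤ[X]} (hD : 1 ≤ D)
    (hPd : ∀ i, (P i).natDegree ≤ D - 1) (hP : P ≠ 0)
    (hX : PowerSeries.X ^ (N * D + (N ^ 2 + 1)) ∣
      linForm (fun i : Fin (N + 1) => expSeries i) P) (i : Fin (N + 1)) : P i ≠ 0 := by
  classical
  intro hi
  set S := univ.filter fun i => P i ≠ 0 with hS
  have hcard : S.card ≤ N := by
    have : S.card < (univ : Finset (Fin (N + 1))).card :=
      card_lt_card (filter_ssubset.mpr ⟨i, mem_univ _, by simpa using hi⟩)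
    simpa [Nat.lt_succ_iff] using this
  let e : Fin S.card ≃ S := S.equivFin.symm
  let a : Fin S.card → ℕ := fun i => ((e i : Fin (N + 1)) : ℕ)
  have ha : Function.Injective a := fun x y h =>
    e.injective (Subtype.ext (Fin.ext h))
  have hdet := det_exp_ne_zero ha (P := fun i => P (e i)) fun i => (mem_filter.mp (e i).2).2
  have hlin : linForm (fun i => expSeries (a i)) (fun i => P (e i)) =
      linForm (fun i : Fin (N + 1) => expSeries i) P := by
    simp only [linForm, dotProduct, Function.comp_apply, a]
    rw [e.sum_comp fun x : S => intPolyToPS (P x) * expSeries ((x : Fin (N + 1)) : ℕ),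
      sum_coe_sort S fun x => intPolyToPS (P x) * expSeries (x : ℕ)]
    refine sum_subset (subset_univ _) fun x _ hx => ?_
    have : P x = 0 := by simpa [hS] using hx
    rw [this, map_zero, zero_mul]
  have hne : ∃ i, IsUnit (expSeries (a i)) := by
    obtain ⟨j, hj⟩ := Function.ne_iff.mp hP
    exact ⟨e.symm ⟨j, by simpa [hS] using hj⟩, isUnit_expSeries _⟩
  have h1 := X_pow_dvd_det (A := expMatrix a) (psEuler_exp_system a) hne (by rw [hlin]; exact hX)
  have h2 := natDegree_le_of_dvd h1 hdet
  rw [natDegree_X_pow] at h2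
  have h3 := natDegree_det_connMatrix_le (natDegree_expMatrix_le a)
    (P := fun i => P (e i)) (d := D - 1) fun i => hPd _
  have h4 : S.card * (D - 1 + S.card) ≤ N * (D - 1 + N) := by gcongr
  have h5 : N * (D - 1 + N) ≤ N * D + N ^ 2 := by
    rw [mul_add, sq]
    gcongr
    omega
  omega

lemma psEval_expSeries (α : ℂ) (a : ℕ) : psEval α (expSeries a) = Complex.exp α ^ a := by
  rw [← Complex.exp_nat_mul, Complex.exp_eq_exp_ℂ, NormedSpace.exp_eq_tsum_div, psEval]
  refine tsum_congr fun m => ?_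
  rw [expSeries, PowerSeries.coeff_mk, mul_pow]
  push_cast
  ring

/-- The Hermite-Lindemann theorem. -/
theorem not_isAlgebraic_exp {α : ℂ} (hα : IsAlgebraic ℚ α) (h0 : α ≠ 0) :
    ¬ IsAlgebraic ℚ (Complex.exp α) := by
  intro hβ
  let K := IntermediateField.adjoin ℚ {α, Complex.exp α}
  have : FiniteDimensional ℚ K := by
    refine IntermediateField.finiteDimensional_adjoin fun x hx => ?_
    rcases hx with rfl | rfl
    · exact hα.isIntegral
    · exact hβ.isIntegral
  have : NumberField K := ⟨⟩
  let ζ : K := ⟨α, IntermediateField.subset_adjoin ℚ _ (by simp)⟩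
  let β : K := ⟨Complex.exp α, IntermediateField.subset_adjoin ℚ _ (by simp)⟩
  set N := Module.finrank ℚ K * 2 + 1 with hN
  refine one_ne_zero (eq_zero_of_psEval_eq_mul (N := N) (s := 1) (C₀ := N) (a := N)
    (A := expMatrix fun i : Fin (N + 1) => (i : ℕ)) (F := fun i => expSeries i)
    (c := fun i m => ((i : ℕ) : ℤ) ^ m) (γ := 1) (L := N ^ 2 + 1) (K.val.toRingHom) le_rfl
    (by omega) (by omega) (natDegree_expMatrix_le _) (fun i j n => ?_) (psEuler_exp_system _)
    ⟨0, isUnit_expSeries _⟩ (fun i m => by simp [expSeries]) (fun i m => ?_)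
    (fun D P hD hPd hP hX => det_exp_ne_zero (fun i j h => Fin.ext h)
      (exp_zero_estimate hD hPd hP hX))
    (ζ := ζ) (fun h => h0 (congrArg Subtype.val h)) (v := fun i => β ^ (i : ℕ))
    (fun h => ?_) (fun i => ?_))
  · rw [expMatrix, Matrix.diagonal_apply]
    split_ifs
    · rw [coeff_C_mul, coeff_X]
      have := i.2
      split_ifs
      · simp; omega
      · simp
    · simp
  · have := i.2
    rw [abs_of_nonneg (by positivity)]
    have h1 : ((i : ℕ) : ℤ) ≤ N := by omega
    calc ((i : ℕ) : ℤ) ^ m ≤ (N : ℤ) ^ m := by gcongr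
      _ ≤ (N : ℤ) ^ (m + 1) := pow_le_pow_right₀ (by omega) (by omega)
  · simpa using congrFun h 0
  · rw [one_mul, map_pow]
    exact psEval_expSeries α i

end Exponential

section BesselMatrix

/-- The matrix of the differential system satisfied by the monomials of degree `N` in a solution
`x` of the Bessel system `x' = y`, `y' = -z x` and its Euler derivative `y`. -/
noncomputable def besMatrix (N : ℕ) : Matrix (Fin (N + 1)) (Fin (N + 1)) ℤ[X] :=
  Matrix.of fun j i => if (i : ℕ) + 1 = j then C (j : ℤ)
    else if (i : ℕ) = j + 1 then C (-((N - j : ℕ) : ℤ)) * X else 0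

lemma sum_besMatrix {T : Type*} [CommRing T] (φ : ℤ[X] →+* T) {N : ℕ} (x y : T)
    (j : Fin (N + 1)) :
    ∑ i, φ (besMatrix N j i) * (x ^ (i : ℕ) * y ^ (N - i)) =
      (j : ℕ) * x ^ ((j : ℕ) - 1) * y ^ (N - j + 1) -
        ((N - j : ℕ) : T) * φ X * x ^ ((j : ℕ) + 1) * y ^ (N - j - 1) := by
  have hj := j.2
  have h1 : ∀ i : Fin (N + 1), φ (besMatrix N j i) * (x ^ (i : ℕ) * y ^ (N - i)) =
      (if (i : ℕ) + 1 = j then ((j : ℕ) : T) * (x ^ (i : ℕ) * y ^ (N - i)) else 0) +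
      (if (i : ℕ) = j + 1 then -((N - j : ℕ) : T) * φ X * (x ^ (i : ℕ) * y ^ (N - i)) else 0) := by
    intro i
    simp only [besMatrix, Matrix.of_apply]
    split_ifs with h h'
    · omega
    · simp
    · simp
    · simp
  rw [sum_congr rfl fun i _ => h1 i, sum_add_distrib, sub_eq_add_neg]
  congr 1
  · rcases Nat.eq_zero_or_pos (j : ℕ) with h | h
    · rw [h]; simp
    · rw [sum_eq_single (⟨j - 1, by omega⟩ : Fin (N + 1))]
      · rw [if_pos (by simp; omega)]
        simp only
        rw [show N - (j - 1) = N - j + 1 by omega]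
        ring
      · intro i _ hi
        rw [if_neg]
        intro h'
        exact hi (Fin.ext (by simp; omega))
      · simp
  · rcases Nat.eq_zero_or_pos (N - j : ℕ) with h | h
    · rw [h]; simp
    · rw [sum_eq_single (⟨j + 1, by omega⟩ : Fin (N + 1))]
      · rw [if_pos (by simp)]
        simp only
        rw [show N - (j + 1) = N - j - 1 by omega]
        ring
      · intro i _ hi
        rw [if_neg]
        intro h'
        exact hi (Fin.ext (by simp; omega))
      · simp

lemma natDegree_besMatrix_le {N : ℕ} (i j : Fin (N + 1)) : (besMatrix N i j).natDegree ≤ 1 := by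
  simp only [besMatrix, Matrix.of_apply]
  split_ifs
  · simp
  · exact (natDegree_C_mul_le _ _).trans natDegree_X_le
  · simp

lemma abs_coeff_besMatrix_le {N : ℕ} (i j : Fin (N + 1)) (n : ℕ) :
    |(besMatrix N i j).coeff n| ≤ N := by
  have hi := i.2
  simp only [besMatrix, Matrix.of_apply]
  split_ifs
  · rw [coeff_C]
    split_ifs <;> (simp; try omega)
  · rw [coeff_C_mul, coeff_X]
    split_ifs <;> simp
  · simp

/-- A derivation-like map compatible with the base derivation intertwines the connection. -/
lemma sum_conn_mul {R T : Type*} [CommRing R] [CommRing T] {M : ℕ} {θ : R →+ R} (D : T →+ T)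
    (φ : R →+* T) (A : Matrix (Fin M) (Fin M) R) {e : Fin M → T}
    (hD : ∀ s m, D (φ s * m) = φ (θ s) * m + φ s * D m)
    (he : ∀ j, D (e j) = ∑ i, φ (A j i) * e i) (P : Fin M → R) :
    ∑ i, φ (conn θ A P i) * e i = D (∑ i, φ (P i) * e i) := by
  simp only [map_sum, hD, he, conn, map_add, add_mul, sum_add_distrib, sum_mul, mul_sum, map_mul]
  rw [sum_comm]
  congr 1
  exact sum_congr rfl fun i _ => sum_congr rfl fun j _ => by ring

end BesselMatrix

section CoeffDerivation

variable {S : Type*} [CommRing S]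

lemma coeff_sum_monomial_map (θ : S →+ S) (p : S[X]) (n : ℕ) :
    (∑ i ∈ range (p.natDegree + 1), monomial i (θ (p.coeff i))).coeff n = θ (p.coeff n) := by
  rw [finsetSum_coeff, sum_eq_single n]
  · simp
  · intro b _ hb; rw [coeff_monomial, if_neg hb]
  · intro hn
    have h : p.coeff n = 0 := coeff_eq_zero_of_natDegree_lt (by simpa using hn)
    rw [h, map_zero, map_zero, coeff_zero]

/-- Apply an additive map to all coefficients of a polynomial. -/
noncomputable def mapCoeffHom (θ : S →+ S) : S[X] →+ S[X] where
  toFun p := ∑ i ∈ range (p.natDegree + 1), monomial i (θ (p.coeff i))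
  map_zero' := by simp
  map_add' p q := by
    ext n
    rw [coeff_add, coeff_sum_monomial_map, coeff_sum_monomial_map, coeff_sum_monomial_map,
      coeff_add, map_add]

lemma coeff_mapCoeffHom (θ : S →+ S) (p : S[X]) (n : ℕ) :
    (mapCoeffHom θ p).coeff n = θ (p.coeff n) :=
  coeff_sum_monomial_map θ p n

variable {θ : S →+ S} (hθ : ∀ a b, θ (a * b) = a * θ b + b * θ a)

include hθ in
lemma mapCoeffHom_mul (p q : S[X]) :
    mapCoeffHom θ (p * q) = p * mapCoeffHom θ q + q * mapCoeffHom θ p := by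
  ext n
  rw [mul_comm q, coeff_add, coeff_mapCoeffHom, coeff_mul, coeff_mul, coeff_mul, map_sum,
    ← sum_add_distrib]
  refine sum_congr rfl fun x _ => ?_
  rw [hθ, coeff_mapCoeffHom, coeff_mapCoeffHom]
  ring

lemma mapCoeffHom_C (s : S) : mapCoeffHom θ (C s) = C (θ s) := by
  ext n
  rw [coeff_mapCoeffHom, coeff_C, coeff_C]
  split_ifs <;> simp

include hθ in
lemma mapCoeffHom_X : mapCoeffHom θ (X : S[X]) = 0 := by
  have h1 : θ 1 = 0 := by simpa using hθ 1 1
  ext n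
  rw [coeff_mapCoeffHom, coeff_X]
  split_ifs <;> simp [h1]

/-- The extension of a derivation `θ` to polynomials with `X ↦ κ X²`. -/
noncomputable def riccatiDer (θ : S →+ S) (κ : S) : S[X] →+ S[X] :=
  mapCoeffHom θ + (AddMonoidHom.mulLeft (C κ * X ^ 2)).comp derivative.toAddMonoidHom

lemma riccatiDer_apply (θ : S →+ S) (κ : S) (p : S[X]) :
    riccatiDer θ κ p = mapCoeffHom θ p + C κ * X ^ 2 * derivative p := rfl

include hθ in
lemma riccatiDer_mul (κ : S) (p q : S[X]) :
    riccatiDer θ κ (p * q) = p * riccatiDer θ κ q + q * riccatiDer θ κ p := by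
  simp only [riccatiDer_apply, mapCoeffHom_mul hθ, derivative_mul]
  ring

/-- A map satisfying the Leibniz rule, on powers. -/
lemma leibniz_pow_of_leibniz {T : Type*} [CommRing T] {D : T →+ T}
    (hD : ∀ a b, D (a * b) = a * D b + b * D a) (x : T) (n : ℕ) :
    D (x ^ n) = n * x ^ (n - 1) * D x := by
  induction n with
  | zero => simpa using hD 1 1
  | succ n ih =>
    rw [pow_succ, hD, ih]
    cases n with
    | zero => simp
    | succ n => simp only [Nat.add_sub_cancel]; push_cast; ring

/-- The twist of `riccatiDer` by `-N κ X`. -/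
noncomputable def twistedDer (θ : S →+ S) (κ : S) (N : ℕ) : S[X] →+ S[X] :=
  riccatiDer θ κ - AddMonoidHom.mulLeft ((N : S[X]) * C κ * X)

lemma twistedDer_apply (θ : S →+ S) (κ : S) (N : ℕ) (p : S[X]) :
    twistedDer θ κ N p = riccatiDer θ κ p - (N : S[X]) * C κ * X * p := rfl

include hθ in
lemma twistedDer_C_mul (κ : S) (N : ℕ) (s : S) (p : S[X]) :
    twistedDer θ κ N (C s * p) = C (θ s) * p + C s * twistedDer θ κ N p := by
  simp only [twistedDer_apply, riccatiDer_mul hθ]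
  rw [riccatiDer_apply θ κ (C s), mapCoeffHom_C, derivative_C]
  ring

lemma coeff_twistedDer_zero (κ : S) (N : ℕ) (p : S[X]) :
    (twistedDer θ κ N p).coeff 0 = θ (p.coeff 0) := by
  simp [twistedDer_apply, riccatiDer_apply, coeff_mapCoeffHom, mul_coeff_zero]

lemma coeff_twistedDer_succ (κ : S) (N n : ℕ) (p : S[X]) :
    (twistedDer θ κ N p).coeff (n + 1) = θ (p.coeff (n + 1)) - (N - n) * κ * p.coeff n := by
  have h1 : (C κ * X ^ 2 * derivative p).coeff (n + 1) = κ * (n * p.coeff n) := by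
    rw [mul_assoc, coeff_C_mul, sq, mul_assoc, coeff_X_mul, ← polyEuler_apply, polyEuler_coeff]
  have h2 : ((N : S[X]) * C κ * X * p).coeff (n + 1) = N * κ * p.coeff n := by
    rw [mul_assoc, ← C_eq_natCast, ← C_mul, coeff_C_mul, coeff_X_mul]
  rw [twistedDer_apply, riccatiDer_apply, coeff_sub, coeff_add, coeff_mapCoeffHom, h1, h2]
  ring

include hθ in
/-- A polynomial parametrization of the solutions of the Bessel system. -/
lemma twistedDer_monomial {f g f' κ z : S} (hf : θ f = g) (hg : θ g = -(z * f)) (hf' : f * f' = 1)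
    (hκ : κ = f' ^ 2) {N j : ℕ} (hj : j ≤ N) :
    twistedDer θ κ N (C f ^ j * (C g - C f' * X) ^ (N - j)) =
      (j : S[X]) * C f ^ (j - 1) * (C g - C f' * X) ^ (N - j + 1) -
        ((N - j : ℕ) : S[X]) * C z * C f ^ (j + 1) * (C g - C f' * X) ^ (N - j - 1) := by
  have h1 : θ 1 = 0 := by simpa using hθ 1 1
  have hθf' : θ f' = -(κ * g) := by
    have := hθ f f'
    rw [hf', h1, hf] at this
    have h2 : f' * (f * θ f' + f' * g) = 0 := by rw [← this, mul_zero]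
    rw [hκ]
    linear_combination h2 - θ f' * hf'
  set y : S[X] := C g - C f' * X with hy
  have hF : C f * C f' = (1 : S[X]) := by rw [← C_mul, hf', C_1]
  have hx : riccatiDer θ κ (C f) = y + C κ * X * C f := by
    rw [riccatiDer_apply, mapCoeffHom_C, derivative_C, hf, hy, hκ, C_pow]
    linear_combination -X * C f' * hF
  have hyd : riccatiDer θ κ y = -C z * C f + C κ * X * y := by
    rw [hy, map_sub, riccatiDer_mul hθ, riccatiDer_apply, riccatiDer_apply, riccatiDer_apply,
      mapCoeffHom_C, mapCoeffHom_C, mapCoeffHom_X hθ, derivative_C, derivative_C,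
      derivative_X, hg, hθf']
    simp only [C_neg, C_mul]
    ring
  obtain ⟨m, rfl⟩ := Nat.exists_eq_add_of_le hj
  rw [twistedDer_apply, riccatiDer_mul hθ, leibniz_pow_of_leibniz (riccatiDer_mul hθ κ),
    leibniz_pow_of_leibniz (riccatiDer_mul hθ κ), hx, hyd, Nat.add_sub_cancel_left]
  have e1 : ∀ (n : ℕ) (t : S[X]), (n : S[X]) * t ^ (n - 1) * t = n * t ^ n := by
    intro n t
    cases n with
    | zero => simp
    | succ n => rw [Nat.add_sub_cancel, mul_assoc, ← pow_succ]
  push_cast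
  linear_combination (C κ * X * C f ^ j) * e1 m y + (C κ * X * y ^ m) * e1 j (C f)

end CoeffDerivation

section BesselZeroEstimate

/-- A Wronskian of power series is never a nonzero unit multiple of the square of one of them. -/
lemma wronskian_ne_mul_sq {u a κ : PowerSeries ℚ} (hu : u ≠ 0)
    (hκ : PowerSeries.constantCoeff κ ≠ 0) :
    u * psEuler a - a * psEuler u ≠ κ * u ^ 2 := by
  intro h
  set e := u.order.toNat with he
  obtain ⟨w, hw⟩ : PowerSeries.X ^ e ∣ u := PowerSeries.X_pow_order_dvd
  have hw0 : PowerSeries.constantCoeff w ≠ 0 := by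
    have := PowerSeries.coeff_order hu
    rw [← he] at this
    rw [hw, PowerSeries.coeff_X_pow_mul', if_pos le_rfl, Nat.sub_self,
      PowerSeries.coeff_zero_eq_constantCoeff_apply] at this
    exact this
  have hww : w * w⁻¹ = 1 := PowerSeries.mul_inv_cancel _ hw0
  have hw1 : w ≠ 0 := by rintro rfl; simp at hw0
  obtain ⟨b, ha⟩ : ∃ b, a = w * b := ⟨w⁻¹ * a, by rw [← mul_assoc, hww, one_mul]⟩
  have hX : psEuler ((PowerSeries.X : PowerSeries ℚ) ^ e) = (e : PowerSeries ℚ) * PowerSeries.X ^ e := by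
    ext n
    rw [psEuler_coeff, ← map_natCast (PowerSeries.C : ℚ →+* _), PowerSeries.coeff_C_mul,
      PowerSeries.coeff_X_pow]
    split_ifs with hn
    · rw [hn]
    · simp
  have h1 : psEuler b - (e : PowerSeries ℚ) * b = κ * PowerSeries.X ^ e := by
    refine mul_left_cancel₀ (mul_ne_zero (pow_ne_zero e PowerSeries.X_ne_zero)
      (pow_ne_zero 2 hw1)) ?_
    rw [hw, ha, psEuler_mul, psEuler_mul _ w, hX] at h
    linear_combination h
  have h2 := congrArg (PowerSeries.coeff e) h1
  rw [map_sub, psEuler_coeff, ← map_natCast (PowerSeries.C : ℚ →+* _), PowerSeries.coeff_C_mul,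
    sub_self, PowerSeries.coeff_mul_X_pow', if_pos le_rfl, Nat.sub_self,
    PowerSeries.coeff_zero_eq_constantCoeff_apply] at h2
  exact hκ h2.symm

/-- The generating polynomial of a linear form in Bessel monomials. -/
noncomputable def besForm {N : ℕ} (f g : PowerSeries ℚ) (P : Fin (N + 1) → ℤ[X]) :
    (PowerSeries ℚ)[X] :=
  ∑ i, C (intPolyToPS (P i)) * (C f ^ (i : ℕ) * (C g - C f⁻¹ * X) ^ (N - i))

/-- The upper triangular system satisfied by the coefficients of `besForm`. -/
noncomputable def besUpper (N : ℕ) (κ : PowerSeries ℚ) :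
    Matrix (Fin (N + 1)) (Fin (N + 1)) (PowerSeries ℚ) :=
  Matrix.of fun i j => if (i : ℕ) + 1 = j then -((N : PowerSeries ℚ) - (i : ℕ)) * κ else 0

lemma conn_besUpper_coeff {N : ℕ} (κ : PowerSeries ℚ) (q : (PowerSeries ℚ)[X]) :
    conn psEuler (besUpper N κ) (fun j => q.coeff j) =
      fun j : Fin (N + 1) => (twistedDer psEuler κ N q).coeff j := by
  ext1 j
  obtain ⟨j, hj⟩ := j
  cases j with
  | zero => simp [conn, besUpper, coeff_twistedDer_zero]
  | succ n =>
    rw [conn, coeff_twistedDer_succ, sum_eq_single (⟨n, by omega⟩ : Fin (N + 1))]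
    · simp [besUpper]; ring
    · intro i _ hi
      rw [besUpper, Matrix.of_apply, if_neg, mul_zero]
      intro h
      exact hi (Fin.ext (by simpa using h))
    · simp

lemma dualConn_besUpper {N : ℕ} (κ : PowerSeries ℚ) (u : Fin (N + 1) → PowerSeries ℚ) {m : ℕ}
    (hm : m + 1 < N + 1) :
    dualConn psEuler (besUpper N κ) u ⟨m, by omega⟩ =
      psEuler (u ⟨m, by omega⟩) + ((N : PowerSeries ℚ) - m) * κ * u ⟨m + 1, hm⟩ := by
  rw [dualConn, sum_eq_single (⟨m + 1, hm⟩ : Fin (N + 1))]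
  · simp [besUpper]; ring
  · intro i _ hi
    rw [besUpper, Matrix.of_apply, if_neg, zero_mul]
    intro h
    exact hi (Fin.ext (by simpa using h.symm))
  · simp

lemma dualConn_besUpper_eq_zero {N : ℕ} (κ : PowerSeries ℚ) (u : Fin (N + 1) → PowerSeries ℚ)
    (m : Fin (N + 1)) (hu : ∀ i, m < i → u i = 0) :
    dualConn psEuler (besUpper N κ) u m = psEuler (u m) := by
  rw [dualConn, sum_eq_zero, sub_zero]
  intro i _
  rw [besUpper, Matrix.of_apply]
  split_ifs with h
  · rw [hu i (Fin.lt_def.mpr (by omega)), mul_zero]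
  · rw [zero_mul]

/-- Only vectors with zero first coordinate have dependent iterates for the triangular system. -/
lemma apply_zero_of_annihilator {N : ℕ} {κ : PowerSeries ℚ}
    (hκ : PowerSeries.constantCoeff κ ≠ 0) {Q : Fin (N + 1) → PowerSeries ℚ} (m : ℕ) :
    ∀ (hm : m < N + 1) (u : Fin (N + 1) → PowerSeries ℚ), u ⟨m, hm⟩ ≠ 0 →
      (∀ i : Fin (N + 1), m < i → u i = 0) →
      (∀ k, u ⬝ᵥ (conn psEuler (besUpper N κ))^[k] Q = 0) → Q 0 = 0 := by
  induction m with
  | zero =>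
    intro hm u hu0 hu h
    have h0 := h 0
    rw [Function.iterate_zero, id, dotProduct, sum_eq_single 0] at h0
    · exact (mul_eq_zero.mp h0).resolve_left hu0
    · intro i _ hi
      rw [hu i (Fin.pos_iff_ne_zero.mpr hi), zero_mul]
    · simp
  | succ m ih =>
    intro hm u hu0 hu h
    set d := dualConn psEuler (besUpper N κ) u with hd
    have hdual : ∀ k, d ⬝ᵥ (conn psEuler (besUpper N κ))^[k] Q = 0 := by
      intro k
      have := derivation_dotProduct psEuler_mul (besUpper N κ) u
        ((conn psEuler (besUpper N κ))^[k] Q)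
      rw [h k, map_zero, ← Function.iterate_succ_apply' (conn psEuler (besUpper N κ)),
        h (k + 1), add_zero] at this
      exact this.symm
    have hmN : m < N := by omega
    refine ih (by omega) (u ⟨m + 1, hm⟩ • d - psEuler (u ⟨m + 1, hm⟩) • u) ?_ ?_ fun k => ?_
    · simp only [Pi.sub_apply, Pi.smul_apply, smul_eq_mul, hd]
      rw [dualConn_besUpper κ u hm]
      intro h0
      refine wronskian_ne_mul_sq (a := u ⟨m, by omega⟩)
        (κ := PowerSeries.C (-((N : ℚ) - m)) * κ) hu0 ?_ ?_
      · rw [map_mul, PowerSeries.constantCoeff_C]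
        refine mul_ne_zero (neg_ne_zero.mpr (sub_ne_zero.mpr ?_)) hκ
        exact_mod_cast hmN.ne'
      · simp only [map_neg, map_sub, map_natCast]
        linear_combination h0
    · intro i hi
      simp only [Pi.sub_apply, Pi.smul_apply, smul_eq_mul, hd]
      rw [dualConn_besUpper_eq_zero κ u i fun j hj => hu j (by
        have := Fin.lt_def.mp hj; omega)]
      rcases (Nat.succ_le_of_lt hi).eq_or_lt with h' | h'
      · have : i = ⟨m + 1, hm⟩ := Fin.ext h'.symm
        rw [this]; ring
      · rw [hu i h', map_zero]; ring
    · rw [sub_dotProduct, smul_dotProduct, smul_dotProduct, hdual, h]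
      simp

variable {N : ℕ} {f g : PowerSeries ℚ}

lemma coeff_zero_besForm (P : Fin (N + 1) → ℤ[X]) :
    (besForm f g P).coeff 0 = linForm (fun i : Fin (N + 1) => f ^ (i : ℕ) * g ^ (N - i)) P := by
  rw [coeff_zero_eq_eval_zero, besForm, eval_finsetSum, linForm, dotProduct]
  simp

lemma besForm_sum_smul {n : ℕ} (c : Fin n → ℤ[X]) (P : Fin n → Fin (N + 1) → ℤ[X]) :
    besForm f g (∑ k, c k • P k) = ∑ k, C (intPolyToPS (c k)) * besForm f g (P k) := by
  simp only [besForm, Finset.sum_apply, Pi.smul_apply, smul_eq_mul, map_sum, map_mul, sum_mul, mul_sum]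
  rw [sum_comm]
  exact sum_congr rfl fun i _ => sum_congr rfl fun j _ => by ring

variable (hf : psEuler f = g) (hg : psEuler g = -(PowerSeries.X * f))
  (h0 : PowerSeries.constantCoeff f ≠ 0)

include hf hg in
lemma psEuler_bes_system (j : Fin (N + 1)) :
    psEuler (f ^ (j : ℕ) * g ^ (N - j)) =
      ∑ i, intPolyToPS (besMatrix N j i) * (f ^ (i : ℕ) * g ^ (N - i)) := by
  have hX : intPolyToPS X = PowerSeries.X := by simp [intPolyToPS]
  have e1 : ∀ (n : ℕ) (t : PowerSeries ℚ), t ^ n * t = t ^ (n + 1) := fun n t => (pow_succ t n).symm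
  rw [sum_besMatrix, hX, psEuler_mul, leibniz_pow_of_leibniz psEuler_mul,
    leibniz_pow_of_leibniz psEuler_mul, hf, hg]
  ring

include hf hg h0 in
lemma besForm_conn (P : Fin (N + 1) → ℤ[X]) :
    besForm f g (conn (polyEuler ℤ) (besMatrix N) P) =
      twistedDer psEuler (f⁻¹ ^ 2) N (besForm f g P) := by
  have hX : intPolyToPS X = PowerSeries.X := by simp [intPolyToPS]
  refine sum_conn_mul _ (C.comp intPolyToPS) (besMatrix N) (fun s m => ?_) (fun j => ?_) P
  · simp only [RingHom.comp_apply]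
    rw [twistedDer_C_mul psEuler_mul, psEuler_intPolyToPS]
  · rw [sum_besMatrix, RingHom.comp_apply, hX,
      twistedDer_monomial psEuler_mul hf hg (PowerSeries.mul_inv_cancel f h0) rfl
        (Nat.lt_succ_iff.mp j.2)]

include hf hg h0 in
lemma conn_iterate_besUpper (P : Fin (N + 1) → ℤ[X]) (k : ℕ) :
    (conn psEuler (besUpper N (f⁻¹ ^ 2)))^[k] (fun j => (besForm f g P).coeff j) =
      fun j : Fin (N + 1) => (besForm f g ((conn (polyEuler ℤ) (besMatrix N))^[k] P)).coeff j := by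
  induction k with
  | zero => rfl
  | succ k ih =>
    rw [Function.iterate_succ_apply', ih, conn_besUpper_coeff, Function.iterate_succ_apply',
      besForm_conn hf hg h0]

include hf hg h0 in
/-- If the iterates of the connection on `P` are dependent, then `P` is a relation between the
Bessel monomials. -/
lemma linForm_eq_zero_of_det_eq_zero {P : Fin (N + 1) → ℤ[X]}
    (hdet : (connMatrix (polyEuler ℤ) (besMatrix N) P).det = 0) :
    linForm (fun i : Fin (N + 1) => f ^ (i : ℕ) * g ^ (N - i)) P = 0 := by
  classical
  obtain ⟨c, hc, hrel⟩ := Matrix.exists_vecMul_eq_zero_iff.mpr hdet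
  set Q : Fin (N + 1) → PowerSeries ℚ := fun j => (besForm f g P).coeff j with hQ
  have hdet' : (connMatrix psEuler (besUpper N (f⁻¹ ^ 2)) Q).det = 0 := by
    refine Matrix.exists_vecMul_eq_zero_iff.mp ⟨fun k => intPolyToPS (c k), ?_, ?_⟩
    · intro h
      refine hc (funext fun k => intPolyToPS_injective ?_)
      simpa using congrFun h k
    · have hsum : ∑ k, c k • (conn (polyEuler ℤ) (besMatrix N))^[k] P = 0 := by
        rw [← hrel]; ext1 i; simp [Matrix.vecMul, dotProduct, connMatrix]
      have h1 := besForm_sum_smul (f := f) (g := g) c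
        fun k : Fin (N + 1) => (conn (polyEuler ℤ) (besMatrix N))^[k] P
      rw [hsum] at h1
      ext1 j
      have h2 := congrArg (fun q => coeff q (j : ℕ)) h1
      simp only [finsetSum_coeff, coeff_C_mul] at h2
      simp only [Matrix.vecMul, dotProduct, connMatrix, Matrix.of_apply, hQ,
        conn_iterate_besUpper hf hg h0]
      rw [← h2]
      simp [besForm]
  obtain ⟨u, hu, hann⟩ := exists_annihilator psEuler_mul _ Q hdet'
  have hne : (univ.filter fun k => u k ≠ 0).Nonempty := by
    obtain ⟨k, hk⟩ := Function.ne_iff.mp hu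
    exact ⟨k, by simpa using hk⟩
  set m := (univ.filter fun k => u k ≠ 0).max' hne with hm
  rw [← coeff_zero_besForm]
  refine apply_zero_of_annihilator (κ := f⁻¹ ^ 2) (Q := Q) ?_ m m.2 u
    (mem_filter.mp (max'_mem _ hne)).2 (fun i hi => ?_) hann
  · rw [map_pow, PowerSeries.constantCoeff_inv]
    exact pow_ne_zero 2 (inv_ne_zero h0)
  · by_contra h
    exact absurd (le_max' _ i (by simpa using h)) (not_le.mpr (Fin.lt_def.mpr hi))

include hf hg in
lemma eq_zero_of_bessel_ratio (hf0 : f ≠ 0) {p q : ℤ[X]}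
    (h : intPolyToPS p * g = intPolyToPS q * f) : q = 0 := by
  have h1 := congrArg psEuler h
  rw [psEuler_mul, psEuler_mul, hf, hg, psEuler_intPolyToPS, psEuler_intPolyToPS] at h1
  have hX : intPolyToPS X = PowerSeries.X := by simp [intPolyToPS]
  have h2 : q ^ 2 + X * p ^ 2 = q * polyEuler ℤ p - p * polyEuler ℤ q := by
    refine intPolyToPS_injective (mul_left_cancel₀ hf0 ?_)
    simp only [map_add, map_sub, map_mul, map_pow, hX]
    linear_combination (intPolyToPS (polyEuler ℤ p) - intPolyToPS q) * h - intPolyToPS p * h1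
  by_contra hq
  have hp : p ≠ 0 := by
    rintro rfl
    simp [hq] at h2
  have hdeg : (q * polyEuler ℤ p - p * polyEuler ℤ q).natDegree ≤ q.natDegree + p.natDegree := by
    refine (natDegree_sub_le _ _).trans (max_le ?_ ?_)
    · exact natDegree_mul_le.trans (by gcongr; exact natDegree_polyEuler_le p)
    · rw [add_comm]
      exact natDegree_mul_le.trans (by gcongr; exact natDegree_polyEuler_le q)
  rw [← h2] at hdeg
  have e1 : (q ^ 2).natDegree = 2 * q.natDegree := natDegree_pow q 2
  have e2 : (X * p ^ 2).natDegree = 2 * p.natDegree + 1 := by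
    rw [natDegree_X_mul (pow_ne_zero 2 hp), natDegree_pow]
  rcases lt_or_gt_of_ne (show (q ^ 2).natDegree ≠ (X * p ^ 2).natDegree by omega) with hlt | hlt
  · rw [natDegree_add_eq_right_of_natDegree_lt hlt] at hdeg
    omega
  · rw [natDegree_add_eq_left_of_natDegree_lt hlt] at hdeg
    omega

lemma natDegree_besForm_le (P : Fin (N + 1) → ℤ[X]) : (besForm f g P).natDegree ≤ N := by
  refine natDegree_sum_le_of_forall_le _ _ fun i _ => ?_
  refine (natDegree_C_mul_le _ _).trans ?_
  rw [← C_pow]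
  refine (natDegree_C_mul_le _ _).trans (natDegree_pow_le.trans ?_)
  have : (C g - C f⁻¹ * X : (PowerSeries ℚ)[X]).natDegree ≤ 1 :=
    (natDegree_sub_le _ _).trans (max_le (by simp)
      ((natDegree_C_mul_le _ _).trans natDegree_X_le))
  calc (N - (i : ℕ)) * _ ≤ (N - (i : ℕ)) * 1 := by gcongr
    _ ≤ N := by omega

lemma besForm_smul (a : ℤ[X]) (P : Fin (N + 1) → ℤ[X]) :
    besForm f g (a • P) = C (intPolyToPS a) * besForm f g P := by
  simpa using besForm_sum_smul (f := f) (g := g) (fun _ : Fin 1 => a) fun _ => P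

include h0 in
/-- A linear form whose generating polynomial is a monomial of top degree has proportional
leading coefficients. -/
lemma ratio_of_besForm_eq_monomial {P : Fin (N + 2) → ℤ[X]} {t : PowerSeries ℚ}
    (h : besForm f g P = C t * X ^ (N + 1)) :
    intPolyToPS (P (Fin.last N).castSucc) * g =
      intPolyToPS (-((N + 1 : ℕ) : ℤ[X]) * P (Fin.last (N + 1))) * f := by
  have hff := PowerSeries.mul_inv_cancel f h0
  have hf0 : f ≠ 0 := by rintro rfl; simp at h0
  have hy : eval (f * g) (C g - C f⁻¹ * X : (PowerSeries ℚ)[X]) = 0 := by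
    simp only [eval_sub, eval_mul, eval_C, eval_X]
    linear_combination -g * hff
  have h1 := congrArg (eval (f * g)) h
  have h2 := congrArg (fun q => eval (f * g) (derivative q)) h
  rw [besForm, eval_finsetSum, sum_eq_single (Fin.last (N + 1))] at h1
  · rw [besForm, map_sum, eval_finsetSum, sum_eq_single (Fin.last N).castSucc] at h2
    · have h3 : eval (f * g) (derivative (C g - C f⁻¹ * X : (PowerSeries ℚ)[X])) = -f⁻¹ := by
        simp
      simp only [derivative_mul, derivative_C, ← C_pow, eval_mul, eval_C, zero_mul,
        zero_add, derivative_X_pow, eval_pow, eval_X, Fin.val_castSucc, Fin.val_last,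
        Nat.add_sub_cancel_left, pow_one, h3, Nat.add_sub_cancel] at h2
      simp only [eval_mul, eval_C, eval_pow, eval_X, Fin.val_last, Nat.sub_self, pow_zero,
        eval_one] at h1
      refine mul_left_cancel₀ (pow_ne_zero N hf0) ?_
      simp only [map_mul, map_neg, map_natCast]
      linear_combination (-(f * g)) * h2 + ((N + 1 : ℕ) : PowerSeries ℚ) * h1 -
        f ^ N * intPolyToPS (P (Fin.last N).castSucc) * g * hff
    · intro i _ hi
      simp only [derivative_mul, derivative_C, ← C_pow, eval_mul, eval_C, zero_mul,
        zero_add, derivative_pow, eval_pow, hy]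
      have := i.2
      rcases (show (i : ℕ) = N + 1 ∨ (i : ℕ) < N by
        have : (i : ℕ) ≠ N := fun h => hi (Fin.ext h)
        omega) with h' | h'
      · rw [h', Nat.sub_self]; simp
      · rw [zero_pow (by omega)]; simp
    · simp
  · intro i _ hi
    have : (i : ℕ) ≠ N + 1 := fun h => hi (Fin.ext h)
    simp only [eval_mul, eval_pow, hy]
    rw [zero_pow (by omega), mul_zero, mul_zero]
  · simp

include hf hg h0 in
/-- The Bessel function and its Euler derivative are homogeneously algebraically independent
over polynomials. -/
lemma eq_zero_of_linForm_eq_zero (N : ℕ) : ∀ P : Fin (N + 1) → ℤ[X],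
    linForm (fun i : Fin (N + 1) => f ^ (i : ℕ) * g ^ (N - i)) P = 0 → P = 0 := by
  have hf0 : f ≠ 0 := by rintro rfl; simp at h0
  have hg0 : g ≠ 0 := by
    rintro rfl
    rw [map_zero, eq_comm, neg_eq_zero] at hg
    exact mul_ne_zero PowerSeries.X_ne_zero hf0 hg
  induction N with
  | zero =>
    intro P h
    ext1 i
    obtain rfl : i = 0 := Fin.ext (by omega)
    refine intPolyToPS_injective ?_
    simpa [linForm, dotProduct] using h
  | succ N ih =>
    have hlast : ∀ R : Fin (N + 2) → ℤ[X], R (Fin.last _) = 0 →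
        linForm (fun i : Fin (N + 2) => f ^ (i : ℕ) * g ^ (N + 1 - i)) R = 0 → R = 0 := by
      intro R hR h
      have : (fun i : Fin (N + 1) => R i.castSucc) = 0 := by
        refine ih _ (mul_left_cancel₀ hg0 ?_)
        rw [mul_zero, ← h, linForm, linForm, dotProduct, dotProduct,
          Fin.sum_univ_castSucc (n := N + 1)]
        simp only [Function.comp_apply, hR, map_zero, zero_mul, add_zero, mul_sum,
          Fin.val_castSucc]
        refine sum_congr rfl fun i _ => ?_
        rw [show N + 1 - (i : ℕ) = N - i + 1 by omega]
        ring
      ext1 i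
      refine Fin.lastCases hR (fun i => ?_) i
      exact congrFun this i
    intro P h
    by_contra hP
    set p := P (Fin.last _) with hp
    have hp0 : p ≠ 0 := fun h' => hP (hlast P h' h)
    set c := conn (polyEuler ℤ) (besMatrix (N + 1)) P (Fin.last _) with hc
    have hlin : linForm (fun i : Fin (N + 2) => f ^ (i : ℕ) * g ^ (N + 1 - i))
        (conn (polyEuler ℤ) (besMatrix (N + 1)) P) = 0 := by
      have := psEuler_iterate_linForm (besMatrix (N + 1)) (psEuler_bes_system hf hg) P 1
      rw [Function.iterate_one, Function.iterate_one, h, map_zero] at this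
      exact this.symm
    have hprop : p • conn (polyEuler ℤ) (besMatrix (N + 1)) P = c • P := by
      refine sub_eq_zero.mp (hlast _ ?_ ?_)
      · simp only [Pi.sub_apply, Pi.smul_apply, smul_eq_mul, ← hp, ← hc]
        ring
      · have e : linForm (fun i : Fin (N + 2) => f ^ (i : ℕ) * g ^ (N + 1 - i))
            (p • conn (polyEuler ℤ) (besMatrix (N + 1)) P - c • P) =
            intPolyToPS p * linForm (fun i : Fin (N + 2) => f ^ (i : ℕ) * g ^ (N + 1 - i))
              (conn (polyEuler ℤ) (besMatrix (N + 1)) P) -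
            intPolyToPS c * linForm (fun i : Fin (N + 2) => f ^ (i : ℕ) * g ^ (N + 1 - i)) P := by
          simp only [linForm, dotProduct, Function.comp_apply, Pi.sub_apply, Pi.smul_apply,
            smul_eq_mul, map_sub, map_mul, sub_mul, sum_sub_distrib, mul_sum, mul_assoc]
        rw [e, hlin, h]
        ring
    set q := besForm f g P with hq
    have hDq : C (intPolyToPS p) * twistedDer psEuler (f⁻¹ ^ 2) (N + 1) q =
        C (intPolyToPS c) * q := by
      rw [hq, ← besForm_conn hf hg h0, ← besForm_smul, hprop, besForm_smul]
    have hp0' : intPolyToPS p ≠ 0 := fun h' => hp0 (intPolyToPS_injective (by rw [h', map_zero]))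
    have hlow : ∀ j < N + 1, q.coeff j = 0 := by
      have hstep : ∀ j < N + 1, intPolyToPS p * psEuler (q.coeff j) = intPolyToPS c * q.coeff j →
          q.coeff j = 0 := by
        intro j hj h1
        have h2 := congrArg (fun q => q.coeff (j + 1)) hDq
        simp only [coeff_C_mul, coeff_twistedDer_succ] at h2
        by_contra hne
        refine wronskian_ne_mul_sq (u := q.coeff j) (a := q.coeff (j + 1))
          (κ := PowerSeries.C (((N + 1 : ℕ) : ℚ) - j) * f⁻¹ ^ 2) hne ?_ ?_
        · rw [map_mul, PowerSeries.constantCoeff_C, map_pow, PowerSeries.constantCoeff_inv]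
          refine mul_ne_zero (sub_ne_zero.mpr ?_) (pow_ne_zero 2 (inv_ne_zero h0))
          exact_mod_cast hj.ne'
        · refine mul_left_cancel₀ hp0' ?_
          simp only [map_sub, map_natCast]
          linear_combination q.coeff j * h2 - q.coeff (j + 1) * h1
      intro j
      induction j with
      | zero => intro _; rw [hq, coeff_zero_besForm, h]
      | succ j ihj =>
        intro hj
        refine hstep _ hj ?_
        have h1 := congrArg (fun q => q.coeff (j + 1)) hDq
        simp only [coeff_C_mul, coeff_twistedDer_succ] at h1
        rw [ihj (by omega), mul_zero, sub_zero] at h1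
        exact h1
    have hmon : q = C (q.coeff (N + 1)) * X ^ (N + 1) := by
      ext1 n
      rw [coeff_C_mul, coeff_X_pow]
      rcases lt_trichotomy n (N + 1) with hn | hn | hn
      · rw [hlow n hn, if_neg hn.ne, mul_zero]
      · rw [hn, if_pos rfl, mul_one]
      · rw [if_neg hn.ne', mul_zero]
        exact coeff_eq_zero_of_natDegree_lt ((natDegree_besForm_le P).trans_lt hn)
    have h4 := eq_zero_of_bessel_ratio hf hg hf0 (ratio_of_besForm_eq_monomial h0 hmon)
    rw [neg_mul, neg_eq_zero] at h4
    exact hp0 ((mul_eq_zero.mp h4).resolve_left (by exact_mod_cast Nat.succ_ne_zero N))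

include hf hg h0 in
/-- Zero estimate for homogeneous polynomials in the Bessel function and its derivative. -/
lemma det_bes_ne_zero {P : Fin (N + 1) → ℤ[X]} (hP : P ≠ 0) :
    (connMatrix (polyEuler ℤ) (besMatrix N) P).det ≠ 0 := fun h =>
  hP (eq_zero_of_linForm_eq_zero hf hg h0 N P (linForm_eq_zero_of_det_eq_zero hf hg h0 h))

end BesselZeroEstimate

section BesselValues

/-- Power series with integral numerators of geometric growth over `(m!)²`. -/
def IsBesselType (C₀ : ℕ) (F : PowerSeries ℚ) : Prop :=
  ∃ c : ℕ → ℤ, (∀ m, PowerSeries.coeff m F = (c m : ℚ) / (m.factorial : ℚ) ^ 2) ∧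
    ∀ m, |c m| ≤ (C₀ : ℤ) ^ (m + 1)

lemma IsBesselType.mono {C₀ C₁ : ℕ} {F : PowerSeries ℚ} (h : IsBesselType C₀ F) (hC : C₀ ≤ C₁) :
    IsBesselType C₁ F := by
  obtain ⟨c, hc, hb⟩ := h
  exact ⟨c, hc, fun m => (hb m).trans (by gcongr)⟩

lemma isBesselType_one : IsBesselType 1 1 := by
  refine ⟨fun m => if m = 0 then 1 else 0, fun m => ?_, fun m => ?_⟩
  · rw [PowerSeries.coeff_one]
    split_ifs with h <;> simp [h]
  · simp only []
    split_ifs <;> simp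

lemma IsBesselType.mul {C₀ C₁ : ℕ} {F G : PowerSeries ℚ} (hC₀ : 1 ≤ C₀) (hC₁ : 1 ≤ C₁)
    (hF : IsBesselType C₀ F) (hG : IsBesselType C₁ G) : IsBesselType (8 * C₀ * C₁) (F * G) := by
  obtain ⟨c, hc, hcb⟩ := hF
  obtain ⟨d, hd, hdb⟩ := hG
  refine ⟨fun m => ∑ p ∈ antidiagonal m, (m.choose p.1 : ℤ) ^ 2 * (c p.1 * d p.2),
    fun m => ?_, fun m => ?_⟩
  · rw [PowerSeries.coeff_mul, Int.cast_sum, sum_div]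
    refine sum_congr rfl fun p hp => ?_
    rw [hc, hd, ← mem_antidiagonal.mp hp]
    have h1 : ((p.1 + p.2).factorial : ℚ) =
        ((p.1 + p.2).choose p.1 : ℚ) * p.1.factorial * p.2.factorial := by
      rw [Nat.choose_symm_add]
      exact_mod_cast (Nat.add_choose_mul_factorial_mul_factorial p.1 p.2).symm
    have h2 : ((p.1 + p.2).choose p.1 : ℚ) ≠ 0 := by
      exact_mod_cast (Nat.choose_pos (Nat.le_add_right _ _)).ne'
    have h3 : (p.1.factorial : ℚ) ≠ 0 := by exact_mod_cast p.1.factorial_ne_zero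
    have h4 : (p.2.factorial : ℚ) ≠ 0 := by exact_mod_cast p.2.factorial_ne_zero
    rw [h1]
    push_cast
    field_simp
  · have hC₀' : (1 : ℤ) ≤ C₀ := by exact_mod_cast hC₀
    have hC₁' : (1 : ℤ) ≤ C₁ := by exact_mod_cast hC₁
    have hterm : ∀ p ∈ antidiagonal m, |(m.choose p.1 : ℤ) ^ 2 * (c p.1 * d p.2)| ≤
        (2 ^ m) ^ 2 * ((C₀ : ℤ) ^ (m + 1) * (C₁ : ℤ) ^ (m + 1)) := by
      intro p hp
      have hp' := mem_antidiagonal.mp hp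
      have h1 : (m.choose p.1 : ℤ) ≤ 2 ^ m := by exact_mod_cast Nat.choose_le_two_pow m p.1
      rw [abs_mul, abs_mul, abs_of_nonneg (by positivity : (0 : ℤ) ≤ (m.choose p.1 : ℤ) ^ 2)]
      gcongr
      · exact (hcb _).trans (pow_le_pow_right₀ hC₀' (by omega))
      · exact (hdb _).trans (pow_le_pow_right₀ hC₁' (by omega))
    refine (abs_sum_le_sum_abs _ _).trans ((sum_le_card_nsmul _ _ _ hterm).trans ?_)
    rw [Nat.card_antidiagonal, nsmul_eq_mul]
    have h2 : ((m + 1 : ℕ) : ℤ) ≤ 2 ^ m := by exact_mod_cast Nat.lt_two_pow_self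
    calc ((m + 1 : ℕ) : ℤ) * ((2 ^ m) ^ 2 * ((C₀ : ℤ) ^ (m + 1) * (C₁ : ℤ) ^ (m + 1)))
        ≤ 2 ^ m * ((2 ^ m) ^ 2 * ((C₀ : ℤ) ^ (m + 1) * (C₁ : ℤ) ^ (m + 1))) := by gcongr
      _ = 8 ^ m * ((C₀ : ℤ) ^ (m + 1) * (C₁ : ℤ) ^ (m + 1)) := by
        rw [show (8 : ℤ) = 2 * 2 * 2 by norm_num, mul_pow, mul_pow]; ring
      _ ≤ 8 ^ (m + 1) * ((C₀ : ℤ) ^ (m + 1) * (C₁ : ℤ) ^ (m + 1)) := by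
        gcongr <;> omega
      _ = ((8 * C₀ * C₁ : ℕ) : ℤ) ^ (m + 1) := by
        push_cast; rw [mul_pow, mul_pow]; ring

lemma IsBesselType.pow {C₀ : ℕ} {F : PowerSeries ℚ} (hC₀ : 1 ≤ C₀) (hF : IsBesselType C₀ F)
    (n : ℕ) : IsBesselType ((8 * C₀) ^ n) (F ^ n) := by
  induction n with
  | zero => simpa using isBesselType_one
  | succ n ih =>
    rw [pow_succ, pow_succ]
    exact (ih.mul (Nat.one_le_pow _ _ (by omega)) hC₀ hF).mono (by
      rw [mul_assoc, mul_comm _ C₀, ← mul_assoc, mul_comm])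

/-- The power series `∑ (-1)^k z^k / (k!)²` of the Bessel function of order zero. -/
noncomputable def besSeries : PowerSeries ℚ :=
  PowerSeries.mk fun m => (-1) ^ m / (m.factorial : ℚ) ^ 2

lemma constantCoeff_besSeries : PowerSeries.constantCoeff besSeries ≠ 0 := by
  rw [← PowerSeries.coeff_zero_eq_constantCoeff_apply, besSeries]
  simp

lemma psEuler_psEuler_besSeries :
    psEuler (psEuler besSeries) = -(PowerSeries.X * besSeries) := by
  ext m
  rw [psEuler_coeff, psEuler_coeff, map_neg, besSeries]
  cases m with
  | zero => simp
  | succ m =>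
    rw [PowerSeries.coeff_succ_X_mul, PowerSeries.coeff_mk, PowerSeries.coeff_mk,
      Nat.factorial_succ]
    push_cast
    field_simp
    ring

lemma isBesselType_besSeries : IsBesselType 2 besSeries := by
  refine ⟨fun m => (-1) ^ m, fun m => by simp [besSeries], fun m => ?_⟩
  rw [abs_pow, abs_neg, abs_one, one_pow]
  exact one_le_pow₀ (by norm_num)

lemma isBesselType_psEuler_besSeries : IsBesselType 2 (psEuler besSeries) := by
  refine ⟨fun m => m * (-1) ^ m, fun m => ?_, fun m => ?_⟩
  · rw [psEuler_coeff, besSeries, PowerSeries.coeff_mk]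
    push_cast
    ring
  · rw [abs_mul, abs_pow, abs_neg, abs_one, one_pow, mul_one, Nat.abs_cast]
    exact_mod_cast (Nat.lt_two_pow_self (n := m)).le.trans (Nat.pow_le_pow_right (by norm_num) m.le_succ)

lemma IsBesselType.psSummable {C₀ : ℕ} {F : PowerSeries ℚ} (h : IsBesselType C₀ F) (z : ℂ) :
    PSSummable z F := by
  obtain ⟨c, hc, hb⟩ := h
  exact psSummable_of_bound (by norm_num : 1 ≤ 2) hc hb z

/-- The Bessel function of order zero and its derivative are not proportional to algebraic
numbers at nonzero algebraic points. -/
theorem eq_zero_of_besSeries_ratio {z x y c : ℂ} (hz : IsAlgebraic ℚ z) (hz0 : z ≠ 0)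
    (hx : IsAlgebraic ℚ x) (hy : IsAlgebraic ℚ y) (hxy : x ≠ 0 ∨ y ≠ 0)
    (hf : psEval z besSeries = c * x) (hg : psEval z (psEuler besSeries) = c * y) : c = 0 := by
  let K := IntermediateField.adjoin ℚ {z, x, y}
  have : FiniteDimensional ℚ K := by
    refine IntermediateField.finiteDimensional_adjoin fun t ht => ?_
    rcases ht with rfl | rfl | rfl
    · exact hz.isIntegral
    · exact hx.isIntegral
    · exact hy.isIntegral
  have : NumberField K := ⟨⟩
  let ζ : K := ⟨z, IntermediateField.subset_adjoin ℚ _ (by simp)⟩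
  let x' : K := ⟨x, IntermediateField.subset_adjoin ℚ _ (by simp)⟩
  let y' : K := ⟨y, IntermediateField.subset_adjoin ℚ _ (by simp)⟩
  set N := Module.finrank ℚ K * 2 + 1 with hN
  set C₀ := 8 * 16 ^ N * 16 ^ N with hC₀
  have htype : ∀ i : Fin (N + 1),
      IsBesselType C₀ (besSeries ^ (i : ℕ) * psEuler besSeries ^ (N - i)) := by
    intro i
    have hi := i.2
    refine ((isBesselType_besSeries.pow (by norm_num) i).mul (Nat.one_le_pow _ _ (by norm_num))
      (Nat.one_le_pow _ _ (by norm_num))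
      (isBesselType_psEuler_besSeries.pow (by norm_num) (N - i))).mono ?_
    rw [hC₀]
    gcongr <;> omega
  choose d hd hdb using htype
  refine pow_eq_zero_iff (n := N) (by omega) |>.mp ?_
  refine eq_zero_of_psEval_eq_mul (N := N) (s := 2) (C₀ := C₀) (a := N) (A := besMatrix N)
    (F := fun i : Fin (N + 1) => besSeries ^ (i : ℕ) * psEuler besSeries ^ (N - i)) (c := d)
    (L := 0) K.val.toRingHom (by norm_num)
    (Nat.one_le_iff_ne_zero.mpr (by positivity)) (by omega) natDegree_besMatrix_le
    abs_coeff_besMatrix_le (psEuler_bes_system rfl psEuler_psEuler_besSeries)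
    ⟨Fin.last N, ?_⟩ hd hdb
    (fun D P _ _ hP _ => det_bes_ne_zero rfl psEuler_psEuler_besSeries constantCoeff_besSeries hP)
    (ζ := ζ) (fun h => hz0 (congrArg Subtype.val h))
    (v := fun i => x' ^ (i : ℕ) * y' ^ (N - i)) (fun h => ?_) fun i => ?_
  · rw [Fin.val_last, Nat.sub_self, pow_zero, mul_one]
    refine IsUnit.pow N (PowerSeries.isUnit_iff_constantCoeff.mpr ?_)
    exact isUnit_iff_ne_zero.mpr constantCoeff_besSeries
  · rcases hxy with h' | h'
    · have := congrFun h (Fin.last N)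
      simp only [Fin.val_last, Nat.sub_self, pow_zero, mul_one, Pi.zero_apply] at this
      exact h' (congrArg Subtype.val (pow_eq_zero_iff (n := N) (by omega) |>.mp this))
    · have := congrFun h 0
      simp only [Fin.val_zero, Nat.sub_zero, pow_zero, one_mul, Pi.zero_apply] at this
      exact h' (congrArg Subtype.val (pow_eq_zero_iff (n := N) (by omega) |>.mp this))
  · have h1 := (isBesselType_besSeries.psSummable z).pow (i : ℕ)
    have h2 := (isBesselType_psEuler_besSeries.psSummable z).pow (N - i)
    have h3 : c ^ N = c ^ (i : ℕ) * c ^ (N - i) := by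
      rw [← pow_add, Nat.add_sub_cancel' (Nat.lt_succ_iff.mp i.2)]
    have h4 : psEval z (besSeries ^ (i : ℕ) * psEuler besSeries ^ (N - i)) =
        c ^ N * (x ^ (i : ℕ) * y ^ (N - i)) := by
      rw [psEval_mul h1.1 h2.1, h1.2, h2.2, hf, hg, h3]
      ring
    rw [map_mul, map_pow, map_pow]
    exact h4

end BesselValues

end Arithmetic

/-- The entire function `∑ (-z)^k / (k! Γ(k + ν + 1))`. -/
noncomputable def bes (ν z : ℝ) : ℝ :=
  ∑' k : ℕ, (-1 : ℝ) ^ k / (k.factorial * Real.Gamma ((k : ℝ) + ν + 1)) * z ^ k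

theorem Gamma_bes_pos {ν : ℝ} (hν : -1 < ν) (k : ℕ) : 0 < Real.Gamma ((k : ℝ) + ν + 1) :=
  Real.Gamma_pos_of_pos (by have : (0 : ℝ) ≤ k := k.cast_nonneg; linarith)

theorem Gamma_bes_succ {ν : ℝ} (hν : -1 < ν) (k : ℕ) :
    Real.Gamma (((k + 1 : ℕ) : ℝ) + ν + 1) = ((k : ℝ) + ν + 1) * Real.Gamma ((k : ℝ) + ν + 1) := by
  have : (0 : ℝ) ≤ k := k.cast_nonneg
  rw [← Real.Gamma_add_one (by linarith)]
  congr 1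
  push_cast
  ring

theorem exists_inv_Gamma_le {ν : ℝ} (hν : -1 < ν) :
    ∃ B : ℝ, 0 ≤ B ∧ ∀ k : ℕ, (Real.Gamma ((k : ℝ) + ν + 1))⁻¹ ≤ B := by
  have hp := fun k => inv_pos.2 (Gamma_bes_pos hν k)
  have h1 : ∀ k : ℕ, (Real.Gamma (((k + 1 : ℕ) : ℝ) + ν + 1))⁻¹ ≤
      (Real.Gamma (((1 : ℕ) : ℝ) + ν + 1))⁻¹ := by
    intro k
    induction k with
    | zero => simp
    | succ k ih =>
      refine le_trans ?_ ih
      apply inv_anti₀ (Gamma_bes_pos hν _)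
      rw [Gamma_bes_succ hν (k + 1)]
      refine le_mul_of_one_le_left (Gamma_bes_pos hν _).le ?_
      have : (0 : ℝ) ≤ k := k.cast_nonneg
      push_cast
      linarith
  refine ⟨(Real.Gamma (((0 : ℕ) : ℝ) + ν + 1))⁻¹ + (Real.Gamma (((1 : ℕ) : ℝ) + ν + 1))⁻¹,
    (add_pos (hp 0) (hp 1)).le, fun k => ?_⟩
  cases k with
  | zero => linarith [hp 1]
  | succ k => linarith [h1 k, hp 0]

theorem abs_bes_coeff {ν : ℝ} (hν : -1 < ν) (k : ℕ) :
    |(-1 : ℝ) ^ k / (k.factorial * Real.Gamma ((k : ℝ) + ν + 1))| =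
      (k.factorial : ℝ)⁻¹ * (Real.Gamma ((k : ℝ) + ν + 1))⁻¹ := by
  rw [abs_div, abs_pow, abs_neg, abs_one, one_pow, abs_mul, abs_of_pos (Gamma_bes_pos hν k),
    Nat.abs_cast, one_div, mul_inv]

theorem summable_bes {ν : ℝ} (hν : -1 < ν) (z : ℝ) :
    Summable fun k : ℕ =>
      (-1 : ℝ) ^ k / (k.factorial * Real.Gamma ((k : ℝ) + ν + 1)) * z ^ k := by
  obtain ⟨B, hB, h⟩ := exists_inv_Gamma_le hν
  refine Summable.of_norm_bounded ((Real.summable_pow_div_factorial |z|).mul_left B) fun k => ?_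
  rw [Real.norm_eq_abs, abs_mul, abs_bes_coeff hν, abs_pow]
  calc _ ≤ (k.factorial : ℝ)⁻¹ * B * |z| ^ k := by gcongr; exact h k
    _ = _ := by ring

theorem bes_coeff_succ {ν : ℝ} (k : ℕ) :
    (-1 : ℝ) ^ (k + 1) / ((k + 1).factorial * Real.Gamma (((k + 1 : ℕ) : ℝ) + ν + 1)) *
      ((k + 1 : ℕ) : ℝ) =
    -((-1 : ℝ) ^ k / (k.factorial * Real.Gamma ((k : ℝ) + (ν + 1) + 1))) := by
  have h : ((k + 1 : ℕ) : ℝ) + ν + 1 = (k : ℝ) + (ν + 1) + 1 := by push_cast; ring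
  rw [h, Nat.factorial_succ]
  have : ((k + 1 : ℕ) : ℝ) ≠ 0 := by positivity
  have : (k.factorial : ℝ) ≠ 0 := by positivity
  rw [Nat.cast_mul, mul_assoc, div_mul_eq_mul_div, mul_comm ((-1 : ℝ) ^ (k + 1)),
    mul_div_mul_left _ _ (by assumption), pow_succ]
  ring

theorem hasSum_bes_deriv {ν : ℝ} (hν : -1 < ν) (z : ℝ) :
    HasSum (fun k : ℕ => (-1 : ℝ) ^ k / (k.factorial * Real.Gamma ((k : ℝ) + ν + 1)) *
      ((k : ℝ) * z ^ (k - 1))) (-bes (ν + 1) z) := by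
  rw [← hasSum_nat_add_iff' 1]
  simp only [Finset.range_one, Finset.sum_singleton, Nat.cast_zero, zero_mul, mul_zero, sub_zero,
    Nat.add_sub_cancel]
  have := (summable_bes (show (-1 : ℝ) < ν + 1 by linarith) z).hasSum.neg
  refine this.congr_fun fun k => ?_
  rw [← mul_assoc, bes_coeff_succ]
  ring

theorem hasSum_bes_mul {ν : ℝ} (hν : -1 < ν) (z : ℝ) :
    HasSum (fun k : ℕ => (-1 : ℝ) ^ k / (k.factorial * Real.Gamma ((k : ℝ) + ν + 1)) *
      z ^ k * (k : ℝ)) (-z * bes (ν + 1) z) := by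
  have h := (hasSum_bes_deriv hν z).mul_left z
  rw [mul_neg, ← neg_mul] at h
  refine h.congr_fun fun k => ?_
  cases k with
  | zero => simp
  | succ k => rw [Nat.add_sub_cancel, pow_succ]; ring

theorem hasDerivAt_bes {ν : ℝ} (hν : -1 < ν) (z : ℝ) :
    HasDerivAt (bes ν) (-bes (ν + 1) z) z := by
  obtain ⟨B, hB, h⟩ := exists_inv_Gamma_le hν
  rw [← (hasSum_bes_deriv hν z).tsum_eq]
  have hu : Summable fun k : ℕ => B * ((k.factorial : ℝ)⁻¹ * ((k : ℝ) * (|z| + 1) ^ (k - 1))) := by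
    apply Summable.mul_left
    rw [← summable_nat_add_iff 1]
    refine (Real.summable_pow_div_factorial (|z| + 1)).congr fun k => ?_
    rw [Nat.add_sub_cancel, Nat.factorial_succ]
    push_cast
    field_simp
  refine hasDerivAt_tsum_of_isPreconnected hu Metric.isOpen_ball
    (convex_ball z 1).isPreconnected (g := fun (k : ℕ) (y : ℝ) =>
      (-1 : ℝ) ^ k / (k.factorial * Real.Gamma ((k : ℝ) + ν + 1)) * y ^ k)
    (fun k y _ => (hasDerivAt_pow k y).const_mul _) (fun k y hy => ?_)
    (Metric.mem_ball_self one_pos) (summable_bes hν z) (Metric.mem_ball_self one_pos)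
  have hy' : |y| ≤ |z| + 1 := by
    rw [Metric.mem_ball, Real.dist_eq] at hy
    have := abs_sub_abs_le_abs_sub y z
    linarith
  rw [Real.norm_eq_abs, abs_mul, abs_bes_coeff hν, abs_mul, abs_pow, Nat.abs_cast]
  calc _ ≤ (k.factorial : ℝ)⁻¹ * B * ((k : ℝ) * (|z| + 1) ^ (k - 1)) := by
        gcongr; exact h k
    _ = _ := by ring

theorem bes_contiguous {ν : ℝ} (hν : 0 < ν) (z : ℝ) :
    bes (ν - 1) z = ν * bes ν z - z * bes (ν + 1) z := by
  have h1 := (summable_bes (show -1 < ν by linarith) z).hasSum.mul_left ν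
  have h2 := (h1.add (hasSum_bes_mul (show -1 < ν by linarith) z)).tsum_eq
  have h3 : ν * bes ν z - z * bes (ν + 1) z = ν * bes ν z + -z * bes (ν + 1) z := by ring
  rw [h3]
  refine Eq.trans ?_ h2
  refine tsum_congr fun k => ?_
  have hk : (0 : ℝ) ≤ k := k.cast_nonneg
  have e1 : (k : ℝ) + (ν - 1) + 1 = k + ν := by ring
  have hg : Real.Gamma ((k : ℝ) + ν) ≠ 0 := (Real.Gamma_pos_of_pos (by linarith)).ne'
  rw [e1, Real.Gamma_add_one (by linarith : (k : ℝ) + ν ≠ 0)]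
  have : (k : ℝ) + ν ≠ 0 := by linarith
  have : (k.factorial : ℝ) ≠ 0 := by positivity
  field_simp
  ring

theorem bes_recurrence {ν : ℝ} (hν : -1 < ν) (z : ℝ) :
    z * bes (ν + 2) z = (ν + 1) * bes (ν + 1) z - bes ν z := by
  have := bes_contiguous (show 0 < ν + 1 by linarith) z
  rw [add_sub_cancel_right, add_assoc, one_add_one_eq_two] at this
  linarith

theorem Xi_eq_bes (d ℓ : ℕ) {r : ℝ} (hr : 0 < r) :
    Xi d ℓ r = (1 / 2) ^ ((ℓ : ℝ) + (d : ℝ) / 2 - 1) *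
      (r ^ ℓ * bes ((ℓ : ℝ) + (d : ℝ) / 2 - 1) (r ^ 2 / 4)) := by
  have hpow : r ^ ℓ = r ^ (((2 : ℝ) - d) / 2) * r ^ ((ℓ : ℝ) + (d : ℝ) / 2 - 1) := by
    rw [← Real.rpow_add hr, ← Real.rpow_natCast]
    congr 1
    ring
  rw [hpow, Xi, besselJ, bes, mul_assoc (r ^ _), mul_left_comm ((1 / 2 : ℝ) ^ _)]
  congr 1
  rw [← mul_assoc, ← tsum_mul_left]
  refine tsum_congr fun k => ?_
  rw [Real.rpow_add (by positivity), div_eq_mul_one_div r 2,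
    Real.mul_rpow (z := (ℓ : ℝ) + (d : ℝ) / 2 - 1) hr.le (by positivity),
    show (2 : ℝ) * k = ((2 * k : ℕ) : ℝ) by push_cast; rfl, Real.rpow_natCast, pow_mul,
    show (r * (1 / 2)) ^ 2 = r ^ 2 / 4 by ring]
  ring

theorem deriv_Xi_eq_zero {d ℓ : ℕ} (hd : 2 ≤ d) {r : ℝ} (hr : 0 < r)
    (h : deriv (Xi d ℓ) r = 0) :
    (ℓ : ℝ) * bes ((ℓ : ℝ) + (d : ℝ) / 2 - 1) (r ^ 2 / 4) =
      2 * (r ^ 2 / 4) * bes ((ℓ : ℝ) + (d : ℝ) / 2 - 1 + 1) (r ^ 2 / 4) := by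
  set ν := (ℓ : ℝ) + (d : ℝ) / 2 - 1 with hνdef
  have hν : -1 < ν := by
    have : (2 : ℝ) ≤ d := by exact_mod_cast hd
    have : (0 : ℝ) ≤ ℓ := ℓ.cast_nonneg
    linarith
  have hsq : HasDerivAt (fun s : ℝ => s ^ 2 / 4) (r / 2) r := by
    have := (hasDerivAt_pow 2 r).div_const 4
    rwa [show ((2 : ℕ) : ℝ) * r ^ (2 - 1) / 4 = r / 2 by norm_num; ring] at this
  have hb : HasDerivAt (fun s : ℝ => bes ν (s ^ 2 / 4)) (-bes (ν + 1) (r ^ 2 / 4) * (r / 2)) r :=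
    HasDerivAt.comp (h₂ := bes ν) (h := fun s : ℝ => s ^ 2 / 4) r (hasDerivAt_bes hν (r ^ 2 / 4)) hsq
  have hX : HasDerivAt (Xi d ℓ) ((1 / 2) ^ ν * ((ℓ : ℝ) * r ^ (ℓ - 1) * bes ν (r ^ 2 / 4) +
      r ^ ℓ * (-bes (ν + 1) (r ^ 2 / 4) * (r / 2)))) r := by
    refine (((hasDerivAt_pow ℓ r).mul hb).const_mul ((1 / 2 : ℝ) ^ ν)).congr_of_eventuallyEq ?_
    filter_upwards [lt_mem_nhds hr] with s hs
    exact Xi_eq_bes d ℓ hs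
  rw [hX.deriv] at h
  have h2 := (mul_eq_zero.1 h).resolve_left (by positivity)
  have h3 : r * ((ℓ : ℝ) * r ^ (ℓ - 1)) = ℓ * r ^ ℓ := by
    cases ℓ with
    | zero => simp
    | succ n => rw [Nat.add_sub_cancel, pow_succ]; ring
  have h4 : r ^ ℓ * (ℓ * bes ν (r ^ 2 / 4) - 2 * (r ^ 2 / 4) * bes (ν + 1) (r ^ 2 / 4)) = 0 := by
    linear_combination r * h2 - bes ν (r ^ 2 / 4) * h3
  linarith [(mul_eq_zero.1 h4).resolve_left (by positivity)]

theorem bes_ne_zero_of_large {μ z : ℝ} (hμ : 0 ≤ μ) (hz : 0 ≤ z) (h : Real.exp z < μ + 1) :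
    bes μ z ≠ 0 := by
  have hμ1 : -1 < μ := by linarith
  have hG : 0 < Real.Gamma (μ + 1) := Real.Gamma_pos_of_pos (by linarith)
  have hr : ∀ k : ℕ, (μ + 1) * Real.Gamma (μ + 1) ≤ Real.Gamma (((k + 1 : ℕ) : ℝ) + μ + 1) := by
    intro k
    induction k with
    | zero => rw [Gamma_bes_succ hμ1]; simp
    | succ k ih =>
      refine ih.trans ?_
      rw [Gamma_bes_succ hμ1 (k + 1)]
      refine le_mul_of_one_le_left (Gamma_bes_pos hμ1 _).le ?_
      have : (0 : ℝ) ≤ ((k + 1 : ℕ) : ℝ) := Nat.cast_nonneg _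
      linarith
  have hs := summable_bes hμ1 z
  have h0 : bes μ z = (Real.Gamma (μ + 1))⁻¹ + ∑' k : ℕ, (-1 : ℝ) ^ (k + 1) /
      ((k + 1).factorial * Real.Gamma (((k + 1 : ℕ) : ℝ) + μ + 1)) * z ^ (k + 1) := by
    rw [bes, hs.tsum_eq_zero_add]
    simp
  have he : HasSum (fun k : ℕ => ((μ + 1) * Real.Gamma (μ + 1))⁻¹ *
      (z ^ (k + 1) / (k + 1).factorial)) (((μ + 1) * Real.Gamma (μ + 1))⁻¹ * (Real.exp z - 1)) := by
    apply HasSum.mul_left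
    have := (hasSum_nat_add_iff' 1).2 (NormedSpace.expSeries_div_hasSum_exp z)
    simpa [← Real.exp_eq_exp_ℝ] using this
  have hb := tsum_of_norm_bounded he (f := fun k : ℕ => (-1 : ℝ) ^ (k + 1) /
      ((k + 1).factorial * Real.Gamma (((k + 1 : ℕ) : ℝ) + μ + 1)) * z ^ (k + 1)) fun k => by
    rw [Real.norm_eq_abs, abs_mul, abs_bes_coeff hμ1, abs_pow, abs_of_nonneg hz]
    calc _ ≤ ((k + 1).factorial : ℝ)⁻¹ * ((μ + 1) * Real.Gamma (μ + 1))⁻¹ * z ^ (k + 1) := by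
          gcongr
          exact hr k
      _ = _ := by ring
  intro hzero
  rw [h0] at hzero
  rw [eq_neg_of_add_eq_zero_right hzero, norm_neg, Real.norm_eq_abs,
    abs_of_pos (inv_pos.2 hG), mul_inv, mul_right_comm] at hb
  have h5 : 1 ≤ (μ + 1)⁻¹ * (Real.exp z - 1) :=
    le_of_mul_le_mul_right (by rwa [one_mul]) (inv_pos.2 hG)
  rw [inv_mul_eq_div, one_le_div (by linarith)] at h5
  linarith

theorem bes_ne_zero_or {ν z : ℝ} (hν : -1 < ν) (hz : 0 < z) :
    bes ν z ≠ 0 ∨ bes (ν + 1) z ≠ 0 := by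
  by_contra! h
  have hall : ∀ n : ℕ, bes (ν + n) z = 0 ∧ bes (ν + n + 1) z = 0 := by
    intro n
    induction n with
    | zero => simpa using h
    | succ n ih =>
      have h1 : ν + ((n + 1 : ℕ) : ℝ) = ν + n + 1 := by push_cast; ring
      have hn : (0 : ℝ) ≤ n := n.cast_nonneg
      have h2 := bes_recurrence (show -1 < ν + n by linarith) z
      rw [ih.1, ih.2, mul_zero, sub_zero, mul_eq_zero] at h2
      rw [h1, show ν + n + 1 + 1 = ν + n + 2 by ring]
      exact ⟨ih.2, h2.resolve_left hz.ne'⟩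
  obtain ⟨n, hn⟩ := exists_nat_gt (Real.exp z)
  have hn1 : 1 ≤ n := by
    rcases Nat.eq_zero_or_pos n with rfl | h
    · have := Real.exp_pos z
      simp at hn
      linarith
    · exact h
  have : (1 : ℝ) ≤ n := by exact_mod_cast hn1
  exact bes_ne_zero_of_large (by linarith) hz.le (by linarith) (hall n).1

section BesselAlgebraicity

open Polynomial

/-- Polynomials with `z ^ n * bes (q + n) z = s_n(z) * bes q z` whenever
`a * bes q z = 2 * z * bes (q + 1) z`. -/
noncomputable def besPoly (q a : ℚ) : ℕ → ℚ[X]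
  | 0 => 1
  | 1 => C (a / 2)
  | n + 2 => C (q + n + 1) * besPoly q a (n + 1) - X * besPoly q a n

theorem pow_mul_bes_add {q a : ℚ} {z : ℝ} (hq : -1 < q)
    (h : (a : ℝ) * bes q z = 2 * z * bes (q + 1) z) (n : ℕ) :
    z ^ n * bes (q + n) z = aeval z (besPoly q a n) * bes q z := by
  have hq' : (-1 : ℝ) < q := by exact_mod_cast hq
  induction n using Nat.twoStepInduction with
  | zero => simp [besPoly]
  | one =>
    simp only [besPoly, aeval_C, eq_ratCast, Rat.cast_div, Rat.cast_ofNat, Nat.cast_one, pow_one]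
    linarith
  | more n ih1 ih2 =>
    have hn : (0 : ℝ) ≤ n := n.cast_nonneg
    have hr := bes_recurrence (show (-1 : ℝ) < q + n by linarith) z
    rw [show (q : ℝ) + ((n + 1 : ℕ) : ℝ) = q + n + 1 by push_cast; ring] at ih2
    rw [show (q : ℝ) + ((n + 2 : ℕ) : ℝ) = q + n + 2 by push_cast; ring]
    simp only [besPoly, map_sub, map_mul, aeval_C, aeval_X, eq_ratCast, Rat.cast_add,
      Rat.cast_natCast, Rat.cast_one]
    linear_combination z ^ (n + 1) * hr + ((q : ℝ) + n + 1) * ih2 - z * ih1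

theorem coeff_zero_besPoly_succ (q a : ℚ) (n : ℕ) :
    (besPoly q a (n + 2)).coeff 0 = (q + n + 1) * (besPoly q a (n + 1)).coeff 0 := by
  rw [besPoly, coeff_sub, coeff_C_mul, mul_coeff_zero X, coeff_X_zero, zero_mul, sub_zero]

theorem coeff_one_besPoly_succ (q a : ℚ) (n : ℕ) :
    (besPoly q a (n + 2)).coeff 1 =
      (q + n + 1) * (besPoly q a (n + 1)).coeff 1 - (besPoly q a n).coeff 0 := by
  rw [besPoly, coeff_sub, coeff_C_mul, show (1 : ℕ) = 0 + 1 from rfl, coeff_X_mul]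

theorem coeff_zero_besPoly_pos {q a : ℚ} (hq : 0 ≤ q) (ha : 0 < a) (n : ℕ) :
    0 < (besPoly q a (n + 1)).coeff 0 := by
  induction n with
  | zero =>
    rw [besPoly, coeff_C_zero]
    positivity
  | succ n ih =>
    rw [coeff_zero_besPoly_succ]
    positivity

theorem coeff_zero_besPoly_eq_zero (q : ℚ) (n : ℕ) :
    (besPoly q 0 (n + 1)).coeff 0 = 0 := by
  induction n with
  | zero => simp [besPoly]
  | succ n ih => rw [coeff_zero_besPoly_succ, ih, mul_zero]

theorem coeff_one_besPoly_neg {q : ℚ} (hq : 0 ≤ q) (n : ℕ) :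
    (besPoly q 0 (n + 2)).coeff 1 < 0 := by
  induction n with
  | zero =>
    rw [coeff_one_besPoly_succ]
    simp [besPoly]
  | succ n ih =>
    rw [coeff_one_besPoly_succ, coeff_zero_besPoly_eq_zero, sub_zero]
    exact mul_neg_of_pos_of_neg (by positivity) ih

theorem besPoly_combination_ne_zero {q a : ℚ} (ha : 0 ≤ a) (hq : a ≤ q) {p : ℕ} (hp : 1 ≤ p) :
    2 * besPoly q a (p + 1) - C (a + p) * besPoly q a p ≠ 0 := by
  have hq0 : 0 ≤ q := ha.trans hq
  obtain ⟨n, rfl⟩ := Nat.exists_eq_add_of_le' hp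
  have two : (2 : ℚ[X]) = C 2 := rfl
  intro h
  rcases ha.lt_or_eq with ha' | rfl
  · have h0 := congrArg (fun f => coeff f 0) h
    simp only [two, coeff_sub, coeff_C_mul, coeff_zero_besPoly_succ, coeff_zero] at h0
    have h1 := coeff_zero_besPoly_pos hq0 ha' n
    have h2 : (2 * (q + n + 1) - (a + ((n + 1 : ℕ) : ℚ))) * (besPoly q a (n + 1)).coeff 0 = 0 := by
      linarith
    have h3 := (mul_eq_zero.1 h2).resolve_right h1.ne'
    push_cast at h3
    have : (0 : ℚ) ≤ n := n.cast_nonneg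
    linarith
  · have h0 := congrArg (fun f => coeff f 1) h
    simp only [two, coeff_sub, coeff_C_mul, coeff_zero] at h0
    cases n with
    | zero => simp [besPoly] at h0
    | succ n =>
      rw [coeff_one_besPoly_succ _ _ (n + 1), coeff_zero_besPoly_eq_zero] at h0
      have h1 := coeff_one_besPoly_neg hq0 n
      have h2 : (2 * (q + ((n + 1 : ℕ) : ℚ) + 1) - (0 + ((n + 1 + 1 : ℕ) : ℚ))) *
          (besPoly q 0 (n + 1 + 1)).coeff 1 = 0 := by
        linarith
      have h3 := (mul_eq_zero.1 h2).resolve_right h1.ne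
      push_cast at h3
      have : (0 : ℚ) ≤ n := n.cast_nonneg
      linarith

theorem isAlgebraic_of_bes_eq {q a : ℚ} {z : ℝ} {p : ℕ} (ha : 0 ≤ a) (hq : a ≤ q) (hp : 1 ≤ p)
    (h0 : bes q z ≠ 0) (h1 : (a : ℝ) * bes q z = 2 * z * bes (q + 1) z)
    (h2 : ((a : ℝ) + p) * bes (q + p) z = 2 * z * bes (q + p + 1) z) :
    IsAlgebraic ℚ z := by
  refine ⟨_, besPoly_combination_ne_zero ha hq hp, mul_right_cancel₀ h0 ?_⟩
  have e1 := pow_mul_bes_add (by linarith) h1 p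
  have e2 := pow_mul_bes_add (by linarith) h1 (p + 1)
  rw [show (q : ℝ) + ((p + 1 : ℕ) : ℝ) = q + p + 1 by push_cast; ring] at e2
  have two : (2 : ℚ[X]) = C 2 := rfl
  simp only [two, map_sub, map_mul, aeval_C, eq_ratCast, Rat.cast_add, Rat.cast_natCast,
    Rat.cast_ofNat, zero_mul]
  linear_combination (-2) * e2 + ((a : ℝ) + p) * e1 - z ^ p * h2

/-- `bes ν z` and `bes (ν + 1) z` are proportional to algebraic numbers, not both zero. -/
def BesRatioAlgebraic (ν z : ℝ) : Prop :=
  ∃ c x y : ℝ, c ≠ 0 ∧ IsAlgebraic ℚ x ∧ IsAlgebraic ℚ y ∧ (x ≠ 0 ∨ y ≠ 0) ∧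
    bes ν z = c * x ∧ bes (ν + 1) z = c * y

theorem BesRatioAlgebraic.pred {q : ℚ} {z : ℝ} (hq : 0 < q) (hz : IsAlgebraic ℚ z) (hz0 : z ≠ 0)
    (h : BesRatioAlgebraic q z) : BesRatioAlgebraic (q - 1) z := by
  obtain ⟨c, x, y, hc, hx, hy, hxy, h1, h2⟩ := h
  refine ⟨c, q * x - z * y, x, hc, ?_, hx, ?_, ?_, by rw [sub_add_cancel, h1]⟩
  · exact ((isAlgebraic_algebraMap q).mul hx).sub (hz.mul hy)
  · by_contra! h
    obtain ⟨h, rfl⟩ := h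
    rw [mul_zero, zero_sub, neg_eq_zero, mul_eq_zero] at h
    exact hxy.elim (fun h' => h' rfl) fun h' => h' (h.resolve_left hz0)
  · rw [bes_contiguous (by exact_mod_cast hq), h1, h2]
    ring

theorem BesRatioAlgebraic.of_add_nat {q : ℚ} {z : ℝ} (hq : -1 < q) (hz : IsAlgebraic ℚ z)
    (hz0 : z ≠ 0) (n : ℕ) (h : BesRatioAlgebraic (q + n) z) : BesRatioAlgebraic q z := by
  induction n with
  | zero => simpa using h
  | succ n ih =>
    apply ih
    have : (0 : ℚ) ≤ n := n.cast_nonneg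
    have h' := BesRatioAlgebraic.pred (q := q + (n + 1 : ℕ)) (by push_cast; linarith) hz hz0
      (by exact_mod_cast h)
    rwa [show (((q + (n + 1 : ℕ) : ℚ) : ℝ) - 1) = q + n by push_cast; ring] at h'

theorem psEval_besSeries (z : ℝ) : psEval z besSeries = (bes 0 z : ℂ) := by
  rw [psEval, bes, Complex.ofReal_tsum]
  refine tsum_congr fun k => ?_
  rw [besSeries, PowerSeries.coeff_mk, add_zero, Real.Gamma_nat_eq_factorial]
  push_cast
  ring

theorem psEval_psEuler_besSeries (z : ℝ) :
    psEval z (psEuler besSeries) = ((-z * bes (0 + 1) z : ℝ) : ℂ) := by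
  rw [psEval, ← (hasSum_bes_mul (ν := 0) (by norm_num) z).tsum_eq, Complex.ofReal_tsum]
  refine tsum_congr fun k => ?_
  rw [psEuler_coeff, besSeries, PowerSeries.coeff_mk, add_zero, Real.Gamma_nat_eq_factorial]
  push_cast
  ring

theorem IsAlgebraic.ofReal {x : ℝ} (h : IsAlgebraic ℚ x) : IsAlgebraic ℚ (x : ℂ) :=
  h.algebraMap (A := ℂ)

theorem not_besRatioAlgebraic_zero {z : ℝ} (hz : IsAlgebraic ℚ z) (hz0 : z ≠ 0) :
    ¬ BesRatioAlgebraic 0 z := by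
  rintro ⟨c, x, y, hc, hx, hy, hxy, h1, h2⟩
  refine hc (Complex.ofReal_eq_zero.1 (eq_zero_of_besSeries_ratio hz.ofReal
    (Complex.ofReal_ne_zero.2 hz0) hx.ofReal (hz.neg.mul hy).ofReal ?_ ?_ ?_))
  · refine hxy.imp Complex.ofReal_ne_zero.2 fun h => ?_
    exact Complex.ofReal_ne_zero.2 (mul_ne_zero (neg_ne_zero.2 hz0) h)
  · rw [psEval_besSeries, h1, Complex.ofReal_mul]
  · rw [psEval_psEuler_besSeries, h2]
    push_cast
    ring

theorem factorial_mul_Gamma_half (k : ℕ) :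
    (k.factorial : ℝ) * Real.Gamma (k + -(1 / 2) + 1) * 4 ^ k =
      (2 * k).factorial * √Real.pi := by
  induction k with
  | zero =>
    rw [Nat.cast_zero, show (0 : ℝ) + -(1 / 2) + 1 = 1 / 2 by norm_num, Real.Gamma_one_half_eq]
    simp
  | succ k ih =>
    rw [Gamma_bes_succ (by norm_num), show 2 * (k + 1) = 2 * k + 1 + 1 by ring,
      Nat.factorial_succ, Nat.factorial_succ, Nat.factorial_succ]
    push_cast
    linear_combination (4 * ((k : ℝ) + 1) * (k + 1 / 2)) * ih

theorem bes_neg_half (r : ℝ) :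
    √Real.pi * bes (-(1 / 2)) (r ^ 2 / 4) = Real.cos r := by
  rw [bes, ← tsum_mul_left, ← (Real.hasSum_cos r).tsum_eq]
  refine tsum_congr fun k => ?_
  have hG := (Gamma_bes_pos (show (-1 : ℝ) < -(1 / 2) by norm_num) k).ne'
  have hf : ((2 * k).factorial : ℝ) ≠ 0 := by positivity
  have hk : (k.factorial : ℝ) ≠ 0 := by positivity
  have h := factorial_mul_Gamma_half k
  generalize Real.Gamma (k + -(1 / 2) + 1) = G at hG h ⊢
  rw [div_pow, ← pow_mul]
  field_simp
  linear_combination -r ^ (2 * k) * h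

theorem bes_half (r : ℝ) :
    √Real.pi * bes (-(1 / 2) + 1) (r ^ 2 / 4) * r = 2 * Real.sin r := by
  have hd : HasDerivAt (fun s : ℝ => s ^ 2 / 4) (r / 2) r := by
    have := (hasDerivAt_pow 2 r).div_const 4
    rwa [show ((2 : ℕ) : ℝ) * r ^ (2 - 1) / 4 = r / 2 by norm_num; ring] at this
  have h1 := (HasDerivAt.comp (h₂ := bes (-(1 / 2))) (h := fun s : ℝ => s ^ 2 / 4) r
    (hasDerivAt_bes (by norm_num) (r ^ 2 / 4)) hd).const_mul (√Real.pi)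
  have h2 : (fun s : ℝ => √Real.pi * (bes (-(1 / 2)) ∘ fun s : ℝ => s ^ 2 / 4) s) = Real.cos :=
    funext bes_neg_half
  rw [h2] at h1
  linear_combination (-2) * h1.unique (Real.hasDerivAt_cos r)

theorem not_besRatioAlgebraic_neg_half {r : ℝ} (hr : IsAlgebraic ℚ r) (hr0 : r ≠ 0) :
    ¬ BesRatioAlgebraic (-(1 / 2)) (r ^ 2 / 4) := by
  rintro ⟨c, x, y, hc, hx, hy, -, h1, h2⟩
  have h2' : IsAlgebraic ℚ (2 : ℝ) := isAlgebraic_algebraMap (2 : ℚ)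
  have e1 := bes_neg_half r
  have e2 := bes_half r
  rw [h1] at e1
  rw [h2] at e2
  set w := √Real.pi * c with hw
  have hcos : Real.cos r = w * x := by rw [← e1, hw]; ring
  have hsin : Real.sin r = w * (y * r / 2) := by linear_combination (-1 / 2) * e2
  have hS : IsAlgebraic ℚ (x ^ 2 + (y * r / 2) ^ 2) :=
    (hx.pow 2).add (((hy.mul hr).mul h2'.inv).pow 2)
  have hw2 : w ^ 2 = (x ^ 2 + (y * r / 2) ^ 2)⁻¹ := by
    refine eq_inv_of_mul_eq_one_left ?_
    rw [← Real.cos_sq_add_sin_sq r, hcos, hsin]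
    ring
  have hwa : IsAlgebraic ℚ w := IsAlgebraic.of_pow two_pos (hw2 ▸ hS.inv)
  have hI : IsAlgebraic ℚ Complex.I := IsAlgebraic.of_pow two_pos (by
    rw [Complex.I_sq]; exact isAlgebraic_one.neg)
  refine not_isAlgebraic_exp (hr.ofReal.mul hI)
    (mul_ne_zero (Complex.ofReal_ne_zero.2 hr0) Complex.I_ne_zero) ?_
  rw [Complex.exp_mul_I, ← Complex.ofReal_cos, ← Complex.ofReal_sin, hcos, hsin]
  exact (hwa.mul hx).ofReal.add ((hwa.mul ((hy.mul hr).mul h2'.inv)).ofReal.mul hI)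

theorem not_besRatioAlgebraic_nat_half {d ℓ : ℕ} (hd : 2 ≤ d) {r : ℝ} (hr : IsAlgebraic ℚ r)
    (hr0 : r ≠ 0) : ¬ BesRatioAlgebraic ((ℓ : ℝ) + (d : ℝ) / 2 - 1) (r ^ 2 / 4) := by
  have hz : IsAlgebraic ℚ (r ^ 2 / 4) := (hr.pow 2).mul (isAlgebraic_algebraMap (4 : ℚ)).inv
  have hz0 : r ^ 2 / 4 ≠ 0 := by positivity
  intro h
  rcases Nat.even_or_odd' d with ⟨e, rfl | rfl⟩
  · refine not_besRatioAlgebraic_zero hz hz0 ?_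
    have := BesRatioAlgebraic.of_add_nat (q := 0) (by norm_num) hz hz0 (ℓ + (e - 1)) (by
      convert h using 1
      push_cast [Nat.cast_sub (show 1 ≤ e by lia)]
      ring)
    simpa using this
  · refine not_besRatioAlgebraic_neg_half hr hr0 ?_
    have := BesRatioAlgebraic.of_add_nat (q := -(1 / 2)) (by norm_num) hz hz0 (ℓ + e) (by
      convert h using 1
      push_cast
      ring)
    simpa using this

end BesselAlgebraicity

theorem Xi_deriv_no_common_zeros (d ℓ p : ℕ) (hd : 2 ≤ d) (hp : 1 ≤ p) :
    ¬ ∃ r : ℝ, 0 < r ∧ deriv (Xi d ℓ) r = 0 ∧ deriv (Xi d (ℓ + p)) r = 0 := by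
  rintro ⟨r, hr, h1, h2⟩
  have hd' : (2 : ℝ) ≤ d := by exact_mod_cast hd
  have hdq : (2 : ℚ) ≤ d := by exact_mod_cast hd
  have hℓ : (0 : ℝ) ≤ ℓ := ℓ.cast_nonneg
  have hz0 : 0 < r ^ 2 / 4 := by positivity
  have e1 := deriv_Xi_eq_zero hd hr h1
  have e2 := deriv_Xi_eq_zero hd hr h2
  rw [show ((ℓ + p : ℕ) : ℝ) + (d : ℝ) / 2 - 1 = (ℓ : ℝ) + (d : ℝ) / 2 - 1 + p by push_cast; ring,
    Nat.cast_add] at e2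
  have h0 : bes ((ℓ : ℝ) + (d : ℝ) / 2 - 1) (r ^ 2 / 4) ≠ 0 := by
    intro h
    rw [h, mul_zero, eq_comm, mul_eq_zero] at e1
    have hne := bes_ne_zero_or (show -1 < (ℓ : ℝ) + (d : ℝ) / 2 - 1 by linarith) hz0
    exact hne.elim (fun h' => h' h) fun h' => h' (e1.resolve_left (by positivity))
  have hcast : (((ℓ : ℚ) + (d : ℚ) / 2 - 1 : ℚ) : ℝ) = (ℓ : ℝ) + (d : ℝ) / 2 - 1 := by
    push_cast
    rfl
  have hz : IsAlgebraic ℚ (r ^ 2 / 4) :=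
    isAlgebraic_of_bes_eq (q := (ℓ : ℚ) + (d : ℚ) / 2 - 1) (a := ℓ) ℓ.cast_nonneg
      (by linarith) hp (by rwa [hcast]) (by rw [hcast]; exact_mod_cast e1)
      (by rw [hcast]; exact_mod_cast e2)
  have h4 : IsAlgebraic ℚ (4 : ℝ) := isAlgebraic_algebraMap (4 : ℚ)
  have hra : IsAlgebraic ℚ r := by
    refine IsAlgebraic.of_pow two_pos ?_
    rw [show r ^ 2 = r ^ 2 / 4 * 4 by ring]
    exact hz.mul h4
  have h2z : IsAlgebraic ℚ ((ℓ : ℝ) / (2 * (r ^ 2 / 4))) :=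
    (isAlgebraic_algebraMap (ℓ : ℚ)).mul ((isAlgebraic_algebraMap (2 : ℚ)).mul hz).inv
  refine not_besRatioAlgebraic_nat_half hd hra hr.ne' ⟨_, 1, _, h0, isAlgebraic_one,
    h2z, Or.inl one_ne_zero, (mul_one _).symm, ?_⟩
  rw [mul_div_assoc', eq_div_iff (by positivity)]
  linarith
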